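/- arXiv:2411.03955 — 10 statements merged into one kernel-verified Lean document; each statement's English description precedes it below -/
import Mathlib

section
/- (Theorem 1, upper tail.) Let n ≥ k ≥ 1 and weights w^1,…,w^n ∈ [0,1/k] with Σ_{i=1}^n w^i = 1. Let (X_t)_{t=0,…,T} be a martingale with values in Δ := {x ∈ [0,1]^n : Σ_{i=1}^n x^i = k}, adapted to a filtration (F_t), with X_0 = k·w almost surely, X_T ∈ {0,1}^n almost surely, and such that for every t ≥ 1, almost surely the difference X_t − X_{t−1} vanishes in all but at most two coordinates. Then for every subset A ⊆ {1,…,n} and every δ > 0, setting α := Σ_{i∈A} w^i and η := α − k·Σ_{i∈A} (w^i)², one has P[(1/k)·Σ_{i∈A} X_T^i ≥ α + δ] ≤ π(η, δ, k). -/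
open MeasureTheory ProbabilityTheory Real

/-- `π(η,δ,k) := ((η/(η+δ))^(η+δ) · exp δ)^k`, where the inner power is a real power. -/
noncomputable def piBound (η δ : ℝ) (k : ℕ) : ℝ :=
  ((η / (η + δ)) ^ (η + δ) * Real.exp δ) ^ k

lemma aux_bernoulli (p : ℝ) (hp0 : 0 ≤ p) (hp1 : p ≤ 1) (l : ℝ) (hl : 0 ≤ l) :
    1 + p * (exp l - 1) ≤ exp (l * p + p * (1 - p) * (exp l - 1 - l)) := by
  have hpos : ∀ x : ℝ, 0 < 1 + p * (exp x - 1) := by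
    intro x
    have := exp_pos x
    rcases eq_or_lt_of_le hp0 with h | h
    · subst h; simp
    · nlinarith [mul_pos h this]
  let f : ℝ → ℝ := fun x => x * p + p * (1 - p) * (exp x - 1 - x) - Real.log (1 + p * (exp x - 1))
  have hd : ∀ x, HasDerivAt f
      (1 * p + p * (1 - p) * (exp x - 1) - p * exp x / (1 + p * (exp x - 1))) x := by
    intro x
    have h1 : HasDerivAt (fun x => 1 + p * (exp x - 1)) (p * exp x) x :=
      (((Real.hasDerivAt_exp x).sub_const 1).const_mul p).const_add 1
    have h2 := h1.log (hpos x).ne'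
    have h3 : HasDerivAt (fun x => p * (1 - p) * (exp x - 1 - x)) (p * (1 - p) * (exp x - 1)) x :=
      ((((Real.hasDerivAt_exp x).sub_const 1).sub (hasDerivAt_id x)).const_mul (p * (1 - p)))
    exact (((hasDerivAt_id x).mul_const p).add h3).sub h2
  have hmono : MonotoneOn f (Set.Ici 0) := by
    apply monotoneOn_of_deriv_nonneg (convex_Ici 0)
    · exact fun x _ => (hd x).continuousAt.continuousWithinAt
    · exact fun x _ => (hd x).differentiableAt.differentiableWithinAt
    · intro x hx
      rw [interior_Ici] at hx
      rw [(hd x).deriv]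
      have hu : 0 ≤ exp x - 1 := by linarith [Real.one_le_exp (le_of_lt hx)]
      have hx' := hpos x
      have : 1 * p + p * (1 - p) * (exp x - 1) - p * exp x / (1 + p * (exp x - 1))
          = p * (1 - p) * (exp x - 1) * (p * (exp x - 1)) / (1 + p * (exp x - 1)) := by
        field_simp
        ring
      rw [this]
      have : 0 ≤ 1 - p := by linarith
      positivity
  have h0 : f 0 ≤ f l := hmono (by simp) hl hl
  have hf0 : f 0 = 0 := by simp [f]
  rw [hf0] at h0
  rw [← Real.exp_log (hpos l)]
  apply Real.exp_le_exp.mpr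
  simp only [f] at h0
  linarith

lemma aux_pair {ι : Type*} [Fintype ι] [DecidableEq ι] (f g : ι → ℝ) (c : ℝ) (hc : 0 ≤ c)
    (hf : ∀ i, 0 ≤ f i) (hsum : ∑ i, f i = ∑ i, g i) (i j : ι)
    (hij : ∀ l, l ≠ i → l ≠ j → g l = f l) (A : Finset ι) :
    ∏ l ∈ A, (1 + c * g l) ≤ ∏ l ∈ A, (1 + c * f l)
      + ∑ l ∈ A, (c * ∏ m ∈ A.erase l, (1 + c * f m)) * (g l - f l) := by
  have hs : ∑ l, (g l - f l) = 0 := by rw [Finset.sum_sub_distrib, hsum, sub_self]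
  by_cases hne : i = j
  · subst hne
    have : g = f := by
      rw [Finset.sum_eq_single i (fun b _ hb => by rw [hij b hb hb, sub_self]) (by simp)] at hs
      funext l
      by_cases h : l = i
      · subst h; linarith
      · exact hij l h h
    simp [this]
  have hs2 : g j - f j = -(g i - f i) := by
    have : ∑ l, (g l - f l) = ∑ l ∈ {i, j}, (g l - f l) := by
      symm
      apply Finset.sum_subset (by simp)
      intro x _ hx
      simp only [Finset.mem_insert, Finset.mem_singleton, not_or] at hx
      rw [hij x hx.1 hx.2, sub_self]
    rw [this, Finset.sum_pair hne] at hs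
    linarith
  -- one-coordinate case
  have one : ∀ i j : ι, (∀ l, l ≠ i → l ≠ j → g l = f l) → i ∈ A → j ∉ A →
      ∏ l ∈ A, (1 + c * g l) ≤ ∏ l ∈ A, (1 + c * f l)
      + ∑ l ∈ A, (c * ∏ m ∈ A.erase l, (1 + c * f m)) * (g l - f l) := by
    intro i j hij hi hj
    have hA : ∀ l ∈ A, l ≠ i → g l = f l := fun l hl h => hij l h (fun h' => hj (h' ▸ hl))
    rw [Finset.sum_eq_single i (fun b hb hbi => by rw [hA b hb hbi, sub_self, mul_zero])
      (fun h => absurd hi h)]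
    rw [← Finset.mul_prod_erase A _ hi, ← Finset.mul_prod_erase A (fun l => 1 + c * f l) hi]
    rw [Finset.prod_congr rfl (fun l hl => by
      rw [hA l (Finset.mem_of_mem_erase hl) (Finset.ne_of_mem_erase hl)] :
      ∀ l ∈ A.erase i, 1 + c * g l = 1 + c * f l)]
    apply le_of_eq; ring
  by_cases hi : i ∈ A
  · by_cases hj : j ∈ A
    · have hjA : j ∈ A.erase i := Finset.mem_erase.mpr ⟨Ne.symm hne, hj⟩
      have hiA : i ∈ A.erase j := Finset.mem_erase.mpr ⟨hne, hi⟩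
      have hsumA : ∑ l ∈ A, (c * ∏ m ∈ A.erase l, (1 + c * f m)) * (g l - f l)
          = ∑ l ∈ {i, j}, (c * ∏ m ∈ A.erase l, (1 + c * f m)) * (g l - f l) := by
        symm
        apply Finset.sum_subset
        · intro x hx; simp at hx; rcases hx with rfl | rfl <;> assumption
        · intro x _ hx
          simp only [Finset.mem_insert, Finset.mem_singleton, not_or] at hx
          rw [hij x hx.1 hx.2, sub_self, mul_zero]
      rw [hsumA, Finset.sum_pair hne]
      rw [← Finset.mul_prod_erase A _ hi, ← Finset.mul_prod_erase A (fun l => 1 + c * f l) hi,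
        ← Finset.mul_prod_erase (A.erase i) _ hjA,
        ← Finset.mul_prod_erase (A.erase i) (fun l => 1 + c * f l) hjA,
        ← Finset.mul_prod_erase (A.erase j) (fun l => 1 + c * f l) hiA,
        Finset.erase_right_comm (a := j) (b := i)]
      rw [Finset.prod_congr rfl (fun l hl => by
        rw [hij l (Finset.ne_of_mem_erase (Finset.mem_of_mem_erase hl)) (Finset.ne_of_mem_erase hl)] :
        ∀ l ∈ (A.erase i).erase j, 1 + c * g l = 1 + c * f l)]
      have hP : 0 ≤ ∏ l ∈ (A.erase i).erase j, (1 + c * f l) :=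
        Finset.prod_nonneg (fun l _ => by have := hf l; positivity)
      set P := ∏ l ∈ (A.erase i).erase j, (1 + c * f l)
      have e1 : g j = f j - (g i - f i) := by linarith
      rw [e1]
      have : 0 ≤ P * (c * (g i - f i)) ^ 2 := by positivity
      nlinarith [this]
    · exact one i j hij hi hj
  · by_cases hj : j ∈ A
    · exact one j i (fun l h1 h2 => hij l h2 h1) hj hi
    · have hA : ∀ l ∈ A, g l = f l :=
        fun l hl => hij l (fun h => hi (h ▸ hl)) (fun h => hj (h ▸ hl))
      rw [Finset.sum_eq_zero (fun l hl => by rw [hA l hl, sub_self, mul_zero])]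
      rw [Finset.prod_congr rfl (fun l hl => by rw [hA l hl] :
        ∀ l ∈ A, 1 + c * g l = 1 + c * f l)]
      simp

lemma aux_zero {Ω : Type*} {m0 : MeasurableSpace Ω} {μ : Measure Ω} [IsProbabilityMeasure μ]
    (ℱ : Filtration ℕ m0) (M : ℕ → Ω → ℝ) (hM : Martingale M ℱ μ) (t : ℕ) (C : Ω → ℝ)
    (hC : StronglyMeasurable[ℱ t] C) (K : ℝ) (hK : ∀ᵐ ω ∂μ, ‖C ω‖ ≤ K) :
    Integrable (fun ω => C ω * (M (t + 1) ω - M t ω)) μ ∧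
      ∫ ω, C ω * (M (t + 1) ω - M t ω) ∂μ = 0 := by
  have hC' : AEStronglyMeasurable C μ := (hC.mono (ℱ.le t)).aestronglyMeasurable
  have i1 : Integrable (fun ω => C ω * M (t + 1) ω) μ := (hM.integrable _).bdd_mul hC' hK
  have i2 : Integrable (fun ω => C ω * M t ω) μ := (hM.integrable _).bdd_mul hC' hK
  have h1 := condExp_mul_of_stronglyMeasurable_left hC i1 (hM.integrable (t + 1))
  have h2 : ∫ ω, C ω * M (t + 1) ω ∂μ = ∫ ω, C ω * M t ω ∂μ := by
    rw [← integral_condExp (ℱ.le t) (f := fun ω => C ω * M (t + 1) ω)]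
    apply integral_congr_ae
    filter_upwards [h1, hM.condExp_ae_eq (Nat.le_succ t)] with ω a b
    refine a.trans ?_
    simp only [Pi.mul_apply]
    rw [← b]
  constructor
  · simp only [mul_sub]
    exact i1.sub i2
  · simp only [mul_sub]
    rw [integral_sub i1 i2, h2, sub_self]

lemma aux_prod_bound {ι : Type*} (A : Finset ι) (f : ι → ℝ) (c : ℝ) (hc : 0 ≤ c)
    (hf : ∀ i, f i ∈ Set.Icc (0 : ℝ) 1) :
    0 ≤ ∏ l ∈ A, (1 + c * f l) ∧ ∏ l ∈ A, (1 + c * f l) ≤ (1 + c) ^ A.card := by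
  have h0 : ∀ l, 0 ≤ 1 + c * f l := fun l => by have := (hf l).1; positivity
  refine ⟨Finset.prod_nonneg fun l _ => h0 l, ?_⟩
  rw [← Finset.prod_const]
  apply Finset.prod_le_prod (fun l _ => h0 l)
  intro l _
  nlinarith [(hf l).2]

lemma aux_super {Ω : Type*} {m0 : MeasurableSpace Ω} {μ : Measure Ω} [IsProbabilityMeasure μ]
    (ℱ : Filtration ℕ m0) (n k : ℕ)
    (T : ℕ) (X : ℕ → Ω → (Fin n → ℝ))
    (hmart : ∀ i : Fin n, Martingale (fun t ω => X t ω i) ℱ μ)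
    (hΔ : ∀ t ≤ T, ∀ᵐ ω ∂μ,
      (∀ i, X t ω i ∈ Set.Icc (0 : ℝ) 1) ∧ ∑ i, X t ω i = k)
    (hpair : ∀ t, 1 ≤ t → t ≤ T → ∀ᵐ ω ∂μ, ∃ i j : Fin n,
      ∀ l, l ≠ i → l ≠ j → X t ω l = X (t - 1) ω l)
    (A : Finset (Fin n)) (c : ℝ) (hc : 0 ≤ c) :
    ∀ t ≤ T, Integrable (fun ω => ∏ l ∈ A, (1 + c * X t ω l)) μ ∧
      ∫ ω, ∏ l ∈ A, (1 + c * X t ω l) ∂μ ≤ ∫ ω, ∏ l ∈ A, (1 + c * X 0 ω l) ∂μ := by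
  have hmeas : ∀ (B : Finset (Fin n)) t,
      StronglyMeasurable[ℱ t] (fun ω => ∏ l ∈ B, (1 + c * X t ω l)) := by
    intro B t
    apply Finset.stronglyMeasurable_fun_prod
    intro l _
    exact stronglyMeasurable_const.add (stronglyMeasurable_const.mul ((hmart l).stronglyAdapted t))
  have hint : ∀ t ≤ T, Integrable (fun ω => ∏ l ∈ A, (1 + c * X t ω l)) μ := by
    intro t ht
    apply Integrable.of_bound ((hmeas A t).mono (ℱ.le t)).aestronglyMeasurable ((1 + c) ^ A.card)
    filter_upwards [hΔ t ht] with ω hω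
    obtain ⟨h0, h1⟩ := aux_prod_bound A (X t ω) c hc hω.1
    rwa [Real.norm_of_nonneg h0]
  intro t
  induction t with
  | zero => exact fun h => ⟨hint 0 h, le_rfl⟩
  | succ t ih =>
    intro ht
    have htT : t ≤ T := by omega
    refine ⟨hint _ ht, le_trans ?_ (ih htT).2⟩
    have hz : ∀ l, Integrable (fun ω => (c * ∏ m ∈ A.erase l, (1 + c * X t ω m))
          * (X (t + 1) ω l - X t ω l)) μ ∧
        ∫ ω, (c * ∏ m ∈ A.erase l, (1 + c * X t ω m)) * (X (t + 1) ω l - X t ω l) ∂μ = 0 := by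
      intro l
      apply aux_zero ℱ (fun t ω => X t ω l) (hmart l) t _
        (stronglyMeasurable_const.mul (hmeas (A.erase l) t)) (c * (1 + c) ^ (A.erase l).card)
      filter_upwards [hΔ t htT] with ω hω
      obtain ⟨h0, h1⟩ := aux_prod_bound (A.erase l) (X t ω) c hc hω.1
      change ‖c * ∏ m ∈ A.erase l, (1 + c * X t ω m)‖ ≤ _
      rw [Real.norm_of_nonneg (mul_nonneg hc h0)]
      exact mul_le_mul_of_nonneg_left h1 hc
    have hI : Integrable (fun ω => ∑ l ∈ A, (c * ∏ m ∈ A.erase l, (1 + c * X t ω m))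
          * (X (t + 1) ω l - X t ω l)) μ := integrable_finsetSum _ fun l _ => (hz l).1
    calc ∫ ω, ∏ l ∈ A, (1 + c * X (t + 1) ω l) ∂μ
        ≤ ∫ ω, (∏ l ∈ A, (1 + c * X t ω l) + ∑ l ∈ A, (c * ∏ m ∈ A.erase l, (1 + c * X t ω m))
          * (X (t + 1) ω l - X t ω l)) ∂μ := by
          apply integral_mono_ae (hint _ ht) ((hint t htT).add hI)
          filter_upwards [hΔ t htT, hΔ (t + 1) ht, hpair (t + 1) (by omega) ht] with ω h1 h2 h3
          obtain ⟨i, j, hij⟩ := h3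
          exact aux_pair (X t ω) (X (t + 1) ω) c hc (fun i => (h1.1 i).1)
            (h1.2.trans h2.2.symm) i j hij A
      _ = ∫ ω, ∏ l ∈ A, (1 + c * X t ω l) ∂μ := by
          rw [integral_add (hint t htT) hI, integral_finsetSum _ fun l _ => (hz l).1,
            Finset.sum_eq_zero fun l _ => (hz l).2, add_zero]



/-- **Theorem 1, upper tail.** For a martingale `X` with values in
`Δ = {x ∈ [0,1]^n : ∑ i, x^i = k}`, starting at `k·w`, ending in `{0,1}^n`, and
changing at most two coordinates at each step, the upper tail of the sample
proportion of any set `A` is bounded by `π(η,δ,k)`. -/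
theorem theorem1_upper_tail
    {Ω : Type*} {m0 : MeasurableSpace Ω} {μ : Measure Ω} [IsProbabilityMeasure μ]
    (ℱ : Filtration ℕ m0) (n k : ℕ) (hk : 1 ≤ k) (hkn : k ≤ n)
    (w : Fin n → ℝ) (hw : ∀ i, w i ∈ Set.Icc (0 : ℝ) (1 / k))
    (hwsum : ∑ i, w i = 1)
    (T : ℕ) (X : ℕ → Ω → (Fin n → ℝ))
    (hmart : ∀ i : Fin n, Martingale (fun t ω => X t ω i) ℱ μ)
    (hΔ : ∀ t ≤ T, ∀ᵐ ω ∂μ,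
      (∀ i, X t ω i ∈ Set.Icc (0 : ℝ) 1) ∧ ∑ i, X t ω i = k)
    (hstart : ∀ᵐ ω ∂μ, ∀ i, X 0 ω i = k * w i)
    (hterm : ∀ᵐ ω ∂μ, ∀ i, X T ω i = 0 ∨ X T ω i = 1)
    (hpair : ∀ t, 1 ≤ t → t ≤ T → ∀ᵐ ω ∂μ, ∃ i j : Fin n,
      ∀ l, l ≠ i → l ≠ j → X t ω l = X (t - 1) ω l)
    (A : Finset (Fin n)) (δ : ℝ) (hδ : 0 < δ)
    (α η : ℝ) (hα : α = ∑ i ∈ A, w i) (hη : η = α - k * ∑ i ∈ A, (w i) ^ 2) :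
    μ {ω | α + δ ≤ (1 / k) * ∑ i ∈ A, X T ω i} ≤ ENNReal.ofReal (piBound η δ k) := by
  have hk0 : (0 : ℝ) < k := by exact_mod_cast hk
  have hp : ∀ i, (k * w i) ∈ Set.Icc (0 : ℝ) 1 := by
    intro i
    obtain ⟨h0, h1⟩ := hw i
    refine ⟨by positivity, ?_⟩
    rw [le_div_iff₀ hk0] at h1
    linarith
  have hkη : k * η = ∑ i ∈ A, (k * w i) * (1 - k * w i) := by
    rw [hη, hα, mul_sub, Finset.mul_sum, Finset.mul_sum, Finset.mul_sum, ← Finset.sum_sub_distrib]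
    exact Finset.sum_congr rfl fun i _ => by ring
  have hη0 : 0 ≤ η := by
    have : 0 ≤ k * η := by
      rw [hkη]
      exact Finset.sum_nonneg fun i _ => mul_nonneg (hp i).1 (by linarith [(hp i).2])
    exact nonneg_of_mul_nonneg_right this hk0
  have hkα : k * α = ∑ i ∈ A, k * w i := by rw [hα, Finset.mul_sum]
  -- Chernoff bound
  have key : ∀ l : ℝ, 0 ≤ l → μ.real {ω | α + δ ≤ (1 / k) * ∑ i ∈ A, X T ω i}
      ≤ exp (k * η * (exp l - 1 - l) - l * (k * δ)) := by
    intro l hl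
    have hc : 0 ≤ exp l - 1 := by linarith [Real.one_le_exp hl]
    obtain ⟨hI, hle⟩ := aux_super ℱ n k T X hmart hΔ hpair A (exp l - 1) hc T le_rfl
    have h0 : ∫ ω, ∏ i ∈ A, (1 + (exp l - 1) * X 0 ω i) ∂μ
        ≤ exp (l * (k * α) + k * η * (exp l - 1 - l)) := by
      have : ∫ ω, ∏ i ∈ A, (1 + (exp l - 1) * X 0 ω i) ∂μ
          = ∫ ω, ∏ i ∈ A, (1 + (exp l - 1) * (k * w i)) ∂μ := by
        apply integral_congr_ae
        filter_upwards [hstart] with ω hω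
        simp only [hω]
      rw [this, integral_const]
      simp only [probReal_univ, one_smul]
      rw [hkη, hkα, Finset.mul_sum, Finset.sum_mul, ← Finset.sum_add_distrib, Real.exp_sum]
      apply Finset.prod_le_prod
      · intro i _
        have := (hp i).1
        positivity
      · intro i _
        have := aux_bernoulli (k * w i) (hp i).1 (hp i).2 l hl
        linarith [mul_comm (exp l - 1) (k * w i)]
    have hnn : 0 ≤ᵐ[μ] fun ω => ∏ i ∈ A, (1 + (exp l - 1) * X T ω i) := by
      filter_upwards [hΔ T le_rfl] with ω hω
      exact (aux_prod_bound A (X T ω) _ hc hω.1).1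
    have hmk := mul_meas_ge_le_integral_of_nonneg hnn hI (exp (l * (k * (α + δ))))
    have hsub : μ.real {ω | α + δ ≤ (1 / k) * ∑ i ∈ A, X T ω i}
        ≤ μ.real {ω | exp (l * (k * (α + δ))) ≤ ∏ i ∈ A, (1 + (exp l - 1) * X T ω i)} := by
      apply ENNReal.toReal_mono (measure_ne_top _ _)
      apply measure_mono_ae
      filter_upwards [hterm] with ω hω h
      change α + δ ≤ (1 / k) * ∑ i ∈ A, X T ω i at h
      change exp (l * (k * (α + δ))) ≤ ∏ i ∈ A, (1 + (exp l - 1) * X T ω i)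
      have e : ∏ i ∈ A, (1 + (exp l - 1) * X T ω i) = exp (l * ∑ i ∈ A, X T ω i) := by
        rw [Finset.mul_sum, Real.exp_sum]
        apply Finset.prod_congr rfl
        intro i _
        rcases hω i with h | h <;> simp [h]
      rw [e]
      apply Real.exp_le_exp.mpr
      apply mul_le_mul_of_nonneg_left _ hl
      rw [one_div, inv_mul_eq_div, le_div_iff₀ hk0] at h
      linarith
    have hfin := hmk.trans (hle.trans h0)
    have e2 : exp (l * (k * α) + k * η * (exp l - 1 - l))
        = exp (l * (k * (α + δ))) * exp (k * η * (exp l - 1 - l) - l * (k * δ)) := by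
      rw [← Real.exp_add]; congr 1; ring
    rw [e2] at hfin
    exact hsub.trans (le_of_mul_le_mul_left hfin (exp_pos _))
  rw [← ofReal_measureReal (measure_ne_top _ _)]
  apply ENNReal.ofReal_le_ofReal
  rcases eq_or_lt_of_le hη0 with h | h
  · -- degenerate case
    rw [← h] at key ⊢
    have hpi : piBound 0 δ k = 0 := by
      unfold piBound
      rw [zero_add, zero_div, Real.zero_rpow hδ.ne', zero_mul, zero_pow (by omega)]
    rw [hpi]
    have ht : Filter.Tendsto (fun l : ℝ => exp (-(l * (k * δ)))) Filter.atTop (nhds 0) :=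
      Real.tendsto_exp_neg_atTop_nhds_zero.comp
        (Filter.tendsto_id.atTop_mul_const (by positivity))
    apply ge_of_tendsto ht
    filter_upwards [Filter.eventually_ge_atTop 0] with l hl
    have := key l hl
    simpa using this
  · have hq : 0 < (η + δ) / η := by positivity
    have h1q : 1 ≤ (η + δ) / η := by rw [le_div_iff₀ h]; linarith
    refine (key (Real.log ((η + δ) / η)) (Real.log_nonneg h1q)).trans (le_of_eq ?_)
    unfold piBound
    have hq' : 0 < η / (η + δ) := by positivity
    rw [Real.rpow_def_of_pos hq', ← Real.exp_add, ← Real.exp_nat_mul, Real.exp_log hq]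
    congr 1
    have : Real.log (η / (η + δ)) = - Real.log ((η + δ) / η) := by
      rw [← Real.log_inv, inv_div]
    rw [this]
    field_simp
    ring
end

section
/- (Theorem 1, lower tail.) Let n ≥ k ≥ 1 and weights w^1,…,w^n ∈ [0,1/k] with Σ_{i=1}^n w^i = 1. Let (X_t)_{t=0,…,T} be a martingale with values in Δ := {x ∈ [0,1]^n : Σ_{i=1}^n x^i = k}, adapted to a filtration (F_t), with X_0 = k·w almost surely, X_T ∈ {0,1}^n almost surely, and such that for every t ≥ 1, almost surely the difference X_t − X_{t−1} vanishes in all but at most two coordinates. Then for every subset A ⊆ {1,…,n} and every δ > 0, setting α := Σ_{i∈A} w^i and η := α − k·Σ_{i∈A} (w^i)², one has P[(1/k)·Σ_{i∈A} X_T^i ≤ α − δ] ≤ π(η, δ, k). -/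
open MeasureTheory ProbabilityTheory Real

/-- Weierstrass-type product expansion with negatively correlated increments. -/
lemma prod_step_le {ι : Type*} [DecidableEq ι] (A : Finset ι) (a c : ι → ℝ) (ha : ∀ i, 0 ≤ a i)
    (hac : ∀ i, 0 ≤ a i + c i) (hneg : ∀ i j, i ≠ j → c i * c j ≤ 0) :
    ∏ i ∈ A, (a i + c i) ≤ ∏ i ∈ A, a i + ∑ l ∈ A, (∏ i ∈ A.erase l, a i) * c l := by
  induction A using Finset.induction_on with
  | empty => simp
  | insert m A hm ih =>
    rw [Finset.prod_insert hm, Finset.prod_insert hm, Finset.sum_insert hm,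
      Finset.erase_insert hm]
    have h1 : ∑ l ∈ A, (∏ i ∈ (insert m A).erase l, a i) * c l
        = a m * ∑ l ∈ A, (∏ i ∈ A.erase l, a i) * c l := by
      rw [Finset.mul_sum]
      refine Finset.sum_congr rfl fun l hl => ?_
      have hne : m ≠ l := fun h => hm (h ▸ hl)
      rw [Finset.erase_insert_of_ne hne, Finset.prod_insert (fun h => hm (Finset.mem_of_mem_erase h))]
      ring
    have h2 : c m * ∑ l ∈ A, (∏ i ∈ A.erase l, a i) * c l ≤ 0 := by
      rw [Finset.mul_sum]
      refine Finset.sum_nonpos fun l hl => ?_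
      have hne : m ≠ l := fun h => hm (h ▸ hl)
      have h3 : 0 ≤ ∏ i ∈ A.erase l, a i := Finset.prod_nonneg fun i _ => ha i
      have := mul_nonpos_of_nonneg_of_nonpos h3 (hneg m l hne)
      linarith
    rw [h1]
    have := mul_le_mul_of_nonneg_left ih (hac m)
    linarith

/-- Zero-sum vectors supported on two coordinates have nonpositive pairwise products. -/
lemma pair_neg {n : ℕ} (c : Fin n → ℝ) (hs : ∑ i, c i = 0) (i j : Fin n)
    (h : ∀ l, l ≠ i → l ≠ j → c l = 0) (p q : Fin n) (hpq : p ≠ q) : c p * c q ≤ 0 := by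
  by_cases hp : c p = 0
  · simp [hp]
  by_cases hq : c q = 0
  · simp [hq]
  have h' : ∀ l, l ≠ p ∧ l ≠ q → c l = 0 := by
    intro l hl
    apply h
    · rintro rfl
      have := mt (h p (Ne.symm hl.1))
      have := mt (h q (Ne.symm hl.2))
      grind
    · rintro rfl
      have := fun hh => h p hh (Ne.symm hl.1)
      have := fun hh => h q hh (Ne.symm hl.2)
      grind
  rw [Fintype.sum_eq_add p q hpq h'] at hs
  have : c q = - c p := by linarith
  rw [this]
  nlinarith [sq_nonneg (c p)]

lemma exp_bennett (l z : ℝ) (hl : 0 ≤ l) (hz : |z| ≤ 1) :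
    Real.exp (l * z) ≤ 1 + l * z + z ^ 2 * (Real.exp l - 1 - l) := by
  have h1 := NormedSpace.expSeries_div_hasSum_exp (l * z)
  have h2 := NormedSpace.expSeries_div_hasSum_exp l
  rw [← Real.exp_eq_exp_ℝ] at h1 h2
  rw [← hasSum_nat_add_iff' 2] at h1 h2
  have h := hasSum_le (fun i => ?_) h1 (h2.mul_left (z ^ 2))
  · simp [Finset.sum_range_succ] at h
    linarith
  · have hz1 : z ^ i ≤ 1 := by
      calc z ^ i ≤ |z ^ i| := le_abs_self _
        _ = |z| ^ i := abs_pow _ _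
        _ ≤ 1 := pow_le_one₀ (abs_nonneg _) hz
    have hp : 0 ≤ z ^ 2 * (l ^ (i + 2) / (i + 2).factorial) := by positivity
    have := mul_le_mul_of_nonneg_left hz1 hp
    calc (l * z) ^ (i + 2) / ((i + 2).factorial : ℝ)
        = z ^ 2 * (l ^ (i + 2) / (i + 2).factorial) * z ^ i := by ring
      _ ≤ _ := by simpa using this

lemma bernoulli_bennett (l p : ℝ) (hl : 0 ≤ l) (hp : p ∈ Set.Icc (0 : ℝ) 1) :
    1 - (1 - Real.exp (-l)) * p
      ≤ Real.exp (-l * p + (Real.exp l - 1 - l) * (p * (1 - p))) := by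
  obtain ⟨h0, h1⟩ := hp
  have a1 := exp_bennett l p hl (by rw [abs_le]; constructor <;> linarith)
  have a2 := exp_bennett l (p - 1) hl (by rw [abs_le]; constructor <;> linarith)
  have a3 : (1 - p) * Real.exp (l * p) + p * Real.exp (l * (p - 1))
      ≤ 1 + (Real.exp l - 1 - l) * (p * (1 - p)) := by
    have b1 := mul_le_mul_of_nonneg_left a1 (sub_nonneg.2 h1)
    have b2 := mul_le_mul_of_nonneg_left a2 h0
    nlinarith
  have a4 := Real.add_one_le_exp ((Real.exp l - 1 - l) * (p * (1 - p)))
  have e1 : Real.exp (l * (p - 1)) = Real.exp (l * p) * Real.exp (-l) := by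
    rw [← Real.exp_add]; ring_nf
  have e2 : Real.exp (-l * p) * Real.exp (l * p) = 1 := by
    rw [← Real.exp_add]; simp
  rw [Real.exp_add]
  have : 1 - (1 - Real.exp (-l)) * p = Real.exp (-l * p) *
      ((1 - p) * Real.exp (l * p) + p * Real.exp (l * (p - 1))) := by
    rw [e1]
    linear_combination (-(1 - p) - p * Real.exp (-l)) * e2
  rw [this]
  exact mul_le_mul_of_nonneg_left (by linarith) (Real.exp_pos _).le

lemma step_integral {Ω : Type*} {m0 : MeasurableSpace Ω} {μ : Measure Ω} [IsProbabilityMeasure μ]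
    (ℱ : Filtration ℕ m0) (Y : ℕ → Ω → ℝ) (hY : Martingale Y ℱ μ) (t : ℕ) (G : Ω → ℝ)
    (hG : StronglyMeasurable[ℱ t] G) (hb : ∀ᵐ ω ∂μ, ‖G ω‖ ≤ 1) :
    Integrable (fun ω => G ω * (Y (t + 1) ω - Y t ω)) μ ∧
      ∫ ω, G ω * (Y (t + 1) ω - Y t ω) ∂μ = 0 := by
  have hD : Integrable (Y (t + 1) - Y t) μ := (hY.integrable _).sub (hY.integrable _)
  have hI : Integrable (G * (Y (t + 1) - Y t)) μ :=
    hD.bdd_mul (hG.mono (ℱ.le t)).aestronglyMeasurable hb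
  refine ⟨hI, ?_⟩
  have h1 := condExp_mul_of_stronglyMeasurable_left hG hI hD
  have h2 : μ[Y (t + 1) - Y t | ℱ t] =ᵐ[μ] 0 := by
    filter_upwards [condExp_sub (hY.integrable (t + 1)) (hY.integrable t) (ℱ t),
      hY.condExp_ae_eq (Nat.le_succ t), hY.condExp_ae_eq (le_refl t)] with ω h1 h2 h3
    rw [h1]; simp only [Pi.sub_apply, Pi.zero_apply]; rw [h2, h3, sub_self]
  have h3 : ∫ ω, (G * (Y (t + 1) - Y t)) ω ∂μ = 0 := by
    rw [← integral_condExp (ℱ.le t)]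
    apply integral_eq_zero_of_ae
    filter_upwards [h1, h2] with ω h1 h2
    rw [h1]; simp [h2]
  exact h3

lemma chernoff_bound
    {Ω : Type*} {m0 : MeasurableSpace Ω} {μ : Measure Ω} [IsProbabilityMeasure μ]
    (ℱ : Filtration ℕ m0) (n k : ℕ) (hk : 1 ≤ k)
    (w : Fin n → ℝ) (hw : ∀ i, w i ∈ Set.Icc (0 : ℝ) (1 / k))
    (T : ℕ) (X : ℕ → Ω → (Fin n → ℝ))
    (hmart : ∀ i : Fin n, Martingale (fun t ω => X t ω i) ℱ μ)
    (hΔ : ∀ t ≤ T, ∀ᵐ ω ∂μ,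
      (∀ i, X t ω i ∈ Set.Icc (0 : ℝ) 1) ∧ ∑ i, X t ω i = k)
    (hstart : ∀ᵐ ω ∂μ, ∀ i, X 0 ω i = k * w i)
    (hterm : ∀ᵐ ω ∂μ, ∀ i, X T ω i = 0 ∨ X T ω i = 1)
    (hpair : ∀ t, 1 ≤ t → t ≤ T → ∀ᵐ ω ∂μ, ∃ i j : Fin n,
      ∀ l, l ≠ i → l ≠ j → X t ω l = X (t - 1) ω l)
    (A : Finset (Fin n)) (δ : ℝ)
    (α η : ℝ) (hα : α = ∑ i ∈ A, w i) (hη : η = α - k * ∑ i ∈ A, (w i) ^ 2)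
    (l : ℝ) (hl : 0 ≤ l) :
    μ.real {ω | (1 / k) * ∑ i ∈ A, X T ω i ≤ α - δ}
      ≤ Real.exp (-l * (k * δ) + (Real.exp l - 1 - l) * (k * η)) := by
  have hk0 : (0 : ℝ) < k := by exact_mod_cast hk
  set b : ℝ := 1 - Real.exp (-l) with hb
  have hb0 : 0 ≤ b := by
    have : Real.exp (-l) ≤ 1 := Real.exp_le_one_iff.2 (by linarith)
    linarith
  have hb1 : b ≤ 1 := by
    have := Real.exp_pos (-l)
    linarith
  have hrange : ∀ x ∈ Set.Icc (0 : ℝ) 1, 0 ≤ 1 - b * x ∧ 1 - b * x ≤ 1 := by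
    intro x hx
    obtain ⟨h0, h1⟩ := hx
    constructor <;> nlinarith
  have hmeas : ∀ t, ∀ B : Finset (Fin n),
      StronglyMeasurable[ℱ t] (fun ω => ∏ i ∈ B, (1 - b * X t ω i)) := by
    intro t B
    refine Finset.stronglyMeasurable_fun_prod B fun i _ => ?_
    exact stronglyMeasurable_const.sub ((hmart i).stronglyMeasurable t |>.const_mul b)
  have hbd : ∀ t ≤ T, ∀ B : Finset (Fin n),
      ∀ᵐ ω ∂μ, ‖∏ i ∈ B, (1 - b * X t ω i)‖ ≤ 1 := by
    intro t ht B
    filter_upwards [hΔ t ht] with ω hω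
    rw [Real.norm_of_nonneg (Finset.prod_nonneg fun i _ => (hrange _ (hω.1 i)).1)]
    exact Finset.prod_le_one (fun i _ => (hrange _ (hω.1 i)).1) fun i _ => (hrange _ (hω.1 i)).2
  have hint : ∀ t ≤ T, Integrable (fun ω => ∏ i ∈ A, (1 - b * X t ω i)) μ := fun t ht =>
    Integrable.of_bound ((hmeas t A).mono (ℱ.le t)).aestronglyMeasurable 1 (hbd t ht A)
  have hmono : ∀ t, t ≤ T → ∫ ω, ∏ i ∈ A, (1 - b * X t ω i) ∂μ
      ≤ ∏ i ∈ A, (1 - b * (k * w i)) := by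
    intro t
    induction t with
    | zero =>
      intro _
      apply le_of_eq
      have : (fun ω => ∏ i ∈ A, (1 - b * X 0 ω i)) =ᵐ[μ]
          fun _ => ∏ i ∈ A, (1 - b * (k * w i)) := by
        filter_upwards [hstart] with ω hω
        simp [hω]
      rw [integral_congr_ae this]
      simp
    | succ t ih =>
      intro ht
      have ht' : t ≤ T := by omega
      refine le_trans ?_ (ih ht')
      have hs := fun i => step_integral ℱ (fun t ω => X t ω i) (hmart i) t _ (hmeas t (A.erase i))
        (hbd t ht' _)
      have hsum : Integrable (fun ω => ∑ i ∈ A, -b * ((∏ j ∈ A.erase i, (1 - b * X t ω j)) *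
          (X (t + 1) ω i - X t ω i))) μ :=
        integrable_finset_sum _ fun i _ => (hs i).1.const_mul (-b)
      have hle : ∫ ω, ∏ i ∈ A, (1 - b * X (t + 1) ω i) ∂μ ≤
          ∫ ω, (∏ i ∈ A, (1 - b * X t ω i) + ∑ i ∈ A, -b * ((∏ j ∈ A.erase i, (1 - b * X t ω j)) *
          (X (t + 1) ω i - X t ω i))) ∂μ := by
        refine integral_mono_ae (hint _ ht) ((hint t ht').add hsum) ?_
        filter_upwards [hΔ _ ht, hΔ _ ht', hpair (t + 1) (by omega) ht] with ω h1 h2 h3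
        obtain ⟨i, j, hij⟩ := h3
        simp only [Nat.add_sub_cancel] at hij
        have key := prod_step_le A (fun i => 1 - b * X t ω i)
          (fun i => -b * (X (t + 1) ω i - X t ω i)) (fun i => (hrange _ (h2.1 i)).1)
          (fun i => by
            have := (hrange _ (h1.1 i)).1
            linarith)
          (pair_neg _ (by
            rw [← Finset.mul_sum, Finset.sum_sub_distrib, h1.2, h2.2]; simp) i j
            (fun l hli hlj => by simp [hij l hli hlj]))
        refine le_trans (le_of_eq ?_) (key.trans (le_of_eq ?_))
        · exact Finset.prod_congr rfl fun i _ => by ring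
        · congr 1
          exact Finset.sum_congr rfl fun i _ => by ring
      refine hle.trans (le_of_eq ?_)
      rw [integral_add (hint t ht') hsum, integral_finset_sum _ fun i _ => (hs i).1.const_mul (-b)]
      simp only [integral_const_mul, (hs _).2, mul_zero, Finset.sum_const_zero, add_zero]
  have hprod : ∏ i ∈ A, (1 - b * (k * w i)) ≤
      Real.exp (-l * (k * α) + (Real.exp l - 1 - l) * (k * η)) := by
    have hkw : ∀ i, (k : ℝ) * w i ∈ Set.Icc (0 : ℝ) 1 := by
      intro i
      refine ⟨mul_nonneg hk0.le (hw i).1, ?_⟩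
      have := mul_le_mul_of_nonneg_left (hw i).2 hk0.le
      rwa [mul_one_div_cancel hk0.ne'] at this
    refine (Finset.prod_le_prod (fun i _ => (hrange _ (hkw i)).1)
      fun i _ => bernoulli_bennett l _ hl (hkw i)).trans (le_of_eq ?_)
    rw [← Real.exp_sum, Finset.sum_add_distrib, ← Finset.mul_sum, ← Finset.mul_sum,
      ← Finset.mul_sum, hη, hα]
    have : ∑ i ∈ A, (k : ℝ) * w i * (1 - k * w i)
        = k * (∑ i ∈ A, w i - k * ∑ i ∈ A, w i ^ 2) := by
      rw [Finset.mul_sum, ← Finset.sum_sub_distrib, Finset.mul_sum]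
      exact Finset.sum_congr rfl fun i _ => by ring
    rw [this]
  have hmarkov := mul_meas_ge_le_integral_of_nonneg (μ := μ)
    (f := fun ω => ∏ i ∈ A, (1 - b * X T ω i))
    (by
      filter_upwards [hΔ T le_rfl] with ω hω
      exact Finset.prod_nonneg fun i _ => (hrange _ (hω.1 i)).1)
    (hint T le_rfl) (Real.exp (-l * (k * (α - δ))))
  have hsub : μ.real {ω | (1 / k) * ∑ i ∈ A, X T ω i ≤ α - δ} ≤
      μ.real {ω | Real.exp (-l * (k * (α - δ))) ≤ ∏ i ∈ A, (1 - b * X T ω i)} := by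
    refine ENNReal.toReal_mono (measure_ne_top _ _) (measure_mono_ae ?_)
    filter_upwards [hterm] with ω hω hmem
    have hmem' : (1 / k) * ∑ i ∈ A, X T ω i ≤ α - δ := hmem
    change Real.exp (-l * (k * (α - δ))) ≤ ∏ i ∈ A, (1 - b * X T ω i)
    have : ∏ i ∈ A, (1 - b * X T ω i) = Real.exp (-l * ∑ i ∈ A, X T ω i) := by
      rw [Finset.mul_sum, Real.exp_sum]
      refine Finset.prod_congr rfl fun i _ => ?_
      rcases hω i with h | h <;> simp [h, hb]
    rw [this, Real.exp_le_exp]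
    have h2 : ∑ i ∈ A, X T ω i ≤ k * (α - δ) := by
      rw [one_div, inv_mul_le_iff₀ hk0] at hmem'
      exact hmem'
    nlinarith
  have hfin := (mul_le_mul_of_nonneg_left hsub (Real.exp_pos (-l * (k * (α - δ)))).le).trans
    (hmarkov.trans ((hmono T le_rfl).trans hprod))
  have e : Real.exp (-l * (k * α) + (Real.exp l - 1 - l) * (k * η)) =
      Real.exp (-l * (k * (α - δ))) *
        Real.exp (-l * (k * δ) + (Real.exp l - 1 - l) * (k * η)) := by
    rw [← Real.exp_add]; ring_nf
  rw [e] at hfin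
  exact le_of_mul_le_mul_left hfin (Real.exp_pos _)

/-- **Theorem 1, lower tail.** For a martingale `X` with values in
`Δ = {x ∈ [0,1]^n : ∑ i, x^i = k}`, starting at `k·w`, ending in `{0,1}^n`, and
changing at most two coordinates at each step, the lower tail of the sample
proportion of any set `A` is bounded by `π(η,δ,k)`. -/
theorem theorem1_lower_tail
    {Ω : Type*} {m0 : MeasurableSpace Ω} {μ : Measure Ω} [IsProbabilityMeasure μ]
    (ℱ : Filtration ℕ m0) (n k : ℕ) (hk : 1 ≤ k) (hkn : k ≤ n)
    (w : Fin n → ℝ) (hw : ∀ i, w i ∈ Set.Icc (0 : ℝ) (1 / k))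
    (hwsum : ∑ i, w i = 1)
    (T : ℕ) (X : ℕ → Ω → (Fin n → ℝ))
    (hmart : ∀ i : Fin n, Martingale (fun t ω => X t ω i) ℱ μ)
    (hΔ : ∀ t ≤ T, ∀ᵐ ω ∂μ,
      (∀ i, X t ω i ∈ Set.Icc (0 : ℝ) 1) ∧ ∑ i, X t ω i = k)
    (hstart : ∀ᵐ ω ∂μ, ∀ i, X 0 ω i = k * w i)
    (hterm : ∀ᵐ ω ∂μ, ∀ i, X T ω i = 0 ∨ X T ω i = 1)
    (hpair : ∀ t, 1 ≤ t → t ≤ T → ∀ᵐ ω ∂μ, ∃ i j : Fin n,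
      ∀ l, l ≠ i → l ≠ j → X t ω l = X (t - 1) ω l)
    (A : Finset (Fin n)) (δ : ℝ) (hδ : 0 < δ)
    (α η : ℝ) (hα : α = ∑ i ∈ A, w i) (hη : η = α - k * ∑ i ∈ A, (w i) ^ 2) :
    μ {ω | (1 / k) * ∑ i ∈ A, X T ω i ≤ α - δ} ≤ ENNReal.ofReal (piBound η δ k) := by
  have hk0 : (0 : ℝ) < k := by exact_mod_cast hk
  have hη0 : 0 ≤ η := by
    rw [hη, hα, Finset.mul_sum, ← Finset.sum_sub_distrib]
    refine Finset.sum_nonneg fun i _ => ?_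
    have h1 := mul_le_mul_of_nonneg_left (hw i).2 hk0.le
    rw [mul_one_div_cancel hk0.ne'] at h1
    have h2 := (hw i).1
    nlinarith
  have hC := chernoff_bound ℱ n k hk w hw T X hmart hΔ hstart hterm hpair A δ α η hα hη
  rw [← ofReal_measureReal]
  apply ENNReal.ofReal_le_ofReal
  rcases hη0.eq_or_lt with h0 | hpos
  · have hz : piBound η δ k = 0 := by
      unfold piBound
      rw [← h0, zero_div, Real.zero_rpow (by linarith), zero_mul, zero_pow (by omega)]
    rw [hz]
    have hlim : Filter.Tendsto (fun l : ℝ => Real.exp (-l * (k * δ))) Filter.atTop (nhds 0) := by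
      apply Real.tendsto_exp_atBot.comp
      exact Filter.tendsto_neg_atTop_atBot.atBot_mul_const (mul_pos hk0 hδ)
    refine ge_of_tendsto hlim ?_
    filter_upwards [Filter.eventually_ge_atTop 0] with l hl
    have := hC l hl
    rw [← h0] at this
    simpa using this
  · have hs : 0 < η + δ := by linarith
    have hr : 0 < (η + δ) / η := by positivity
    have hC' := hC (Real.log ((η + δ) / η))
      (Real.log_nonneg (by rw [le_div_iff₀ hpos]; linarith))
    refine hC'.trans (le_of_eq ?_)
    unfold piBound
    rw [Real.exp_log hr, Real.rpow_def_of_pos (by positivity), ← Real.exp_add, ← Real.exp_nat_mul]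
    have hlog : Real.log (η / (η + δ)) = - Real.log ((η + δ) / η) := by
      rw [← Real.log_inv, inv_div]
    rw [hlog]
    congr 1
    field_simp
    ring
end

section
/- (Theorem 2, upper tail, round-martingale form.) Let k ≥ 1 and let (Z_ℓ)_{ℓ=0,…,k} be a real-valued martingale adapted to a filtration (F_ℓ) with Z_0 = k·α almost surely for a constant α ∈ [0,1], such that |Z_ℓ − Z_{ℓ−1}| ≤ 1 almost surely for every ℓ, and such that Σ_{ℓ=1}^k E[(Z_ℓ − Z_{ℓ−1})² | F_{ℓ−1}] ≤ k·η almost surely for a constant η with 0 < η. Then for every δ with 0 < δ < 1, P[Z_k − Z_0 ≥ k·δ] ≤ π*(η, δ, k). -/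
open MeasureTheory ProbabilityTheory Real

/-- Kullback–Leibler divergence `D(q‖p) = q·ln(q/p) + (1−q)·ln((1−q)/(1−p))`. -/
noncomputable def klDiv (q p : ℝ) : ℝ :=
  q * Real.log (q / p) + (1 - q) * Real.log ((1 - q) / (1 - p))

/-- `π*(η,δ,k) := exp(−D((η+δ)/(1+η) ‖ η/(1+η))·k)`. -/
noncomputable def piStar (η δ : ℝ) (k : ℕ) : ℝ :=
  Real.exp (-(klDiv ((η + δ) / (1 + η)) (η / (1 + η))) * k)

lemma aux_sign {u : ℝ} (hu : 0 ≤ u) : 0 ≤ Real.exp u * (u - 2) + u + 2 := by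
  have hd : ∀ x : ℝ, HasDerivAt (fun u : ℝ => Real.exp u * (u - 2) + u + 2)
      (Real.exp x * (x - 2) + Real.exp x * 1 + 1) x := by
    intro x
    exact ((((Real.hasDerivAt_exp x).mul ((hasDerivAt_id x).sub_const 2)).add
      (hasDerivAt_id x)).add_const 2)
  have hm : Monotone (fun u : ℝ => Real.exp u * (u - 2) + u + 2) := by
    apply monotone_of_deriv_nonneg (fun x => (hd x).differentiableAt)
    intro x
    rw [(hd x).deriv]
    have h1 := Real.add_one_le_exp (-x)
    have h2 : Real.exp x * Real.exp (-x) = 1 := by rw [← Real.exp_add]; simp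
    nlinarith [Real.exp_pos x]
  have := hm hu
  simpa using this

lemma aux_mono : MonotoneOn (fun u : ℝ => (Real.exp u - 1 - u) / u ^ 2) (Set.Ioi 0) := by
  have hd : ∀ x : ℝ, 0 < x → HasDerivAt (fun u : ℝ => (Real.exp u - 1 - u) / u ^ 2)
      (((Real.exp x - 1) * x ^ 2 - (Real.exp x - 1 - x) * (2 * x)) / (x ^ 2) ^ 2) x := by
    intro x hx
    have h1 : HasDerivAt (fun u : ℝ => Real.exp u - 1 - u) (Real.exp x - 1) x :=
      ((Real.hasDerivAt_exp x).sub_const 1).sub (hasDerivAt_id x)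
    have h2 : HasDerivAt (fun u : ℝ => u ^ 2) (2 * x) x := by
      simpa using hasDerivAt_pow 2 x
    exact h1.div h2 (by positivity)
  apply monotoneOn_of_deriv_nonneg (convex_Ioi 0)
  · intro x hx
    exact (hd x hx).continuousAt.continuousWithinAt
  · intro x hx
    rw [interior_Ioi] at hx
    exact (hd x hx).differentiableAt.differentiableWithinAt
  · intro x hx
    rw [interior_Ioi] at hx
    rw [(hd x hx).deriv]
    have hx0 : 0 < x := hx
    have := aux_sign hx0.le
    apply div_nonneg _ (by positivity)
    nlinarith

lemma aux_quad {u w : ℝ} (hw : 0 < w) (huw : u ≤ w) :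
    Real.exp u ≤ 1 + u + (Real.exp w - 1 - w) / w ^ 2 * u ^ 2 := by
  rcases le_or_gt u 0 with hu | hu
  · have h1 : 1 / 2 ≤ (Real.exp w - 1 - w) / w ^ 2 := by
      rw [le_div_iff₀ (by positivity)]
      have := Real.quadratic_le_exp_of_nonneg hw.le
      linarith
    have h2 := Real.quadratic_le_exp_of_nonneg (neg_nonneg.2 hu)
    have h3 : Real.exp u * Real.exp (-u) = 1 := by rw [← Real.exp_add]; simp
    have h4 : Real.exp u ≤ 1 + u + u ^ 2 / 2 := by
      have hp : 0 < 1 - u + u ^ 2 / 2 := by nlinarith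
      have h5 : Real.exp u * (1 - u + u ^ 2 / 2) ≤ 1 := by
        rw [← h3]
        apply mul_le_mul_of_nonneg_left _ (Real.exp_pos u).le
        nlinarith
      by_contra hc
      push Not at hc
      have := mul_lt_mul_of_pos_right hc hp
      nlinarith [sq_nonneg (u ^ 2)]
    nlinarith [sq_nonneg u]
  · have h := aux_mono (Set.mem_Ioi.2 hu) (Set.mem_Ioi.2 hw) huw
    simp only at h
    rw [div_le_iff₀ (by positivity)] at h
    linarith

lemma aux_super_s3
    {Ω : Type*} {m0 : MeasurableSpace Ω} {μ : Measure Ω} [IsProbabilityMeasure μ]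
    (ℱ : Filtration ℕ m0) (k : ℕ)
    (Z : ℕ → Ω → ℝ) (hmart : Martingale Z ℱ μ)
    (hdiff : ∀ n, n < k → ∀ᵐ ω ∂μ, |Z (n + 1) ω - Z n ω| ≤ 1)
    (η lam A B C g : ℝ) (hlam : 0 ≤ lam) (hC : 0 ≤ C) (hg : 0 < g)
    (hgA : g = A + C * η)
    (hquad : ∀ x ≤ 1, Real.exp (lam * x) ≤ A + B * x + C * x ^ 2)
    (v : ℕ → Ω → ℝ) (hv : ∀ n, v n = μ[fun ω => (Z (n + 1) ω - Z n ω) ^ 2 | ℱ n])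
    (M : ℕ → Ω → ℝ)
    (hM : ∀ n, M n = fun ω => Real.exp (lam * (Z n ω - Z 0 ω)
      - ∑ i ∈ Finset.range n, (C / g * (v i ω - η) + Real.log g))) :
    ∀ n ≤ k, StronglyMeasurable[ℱ n] (M n) ∧ (∃ K, ∀ᵐ ω ∂μ, M n ω ≤ K) ∧ ∫ ω, M n ω ∂μ ≤ 1 := by
  intro n
  induction n with
  | zero =>
    intro _
    have : M 0 = fun _ => 1 := by rw [hM]; simp
    rw [this]
    exact ⟨stronglyMeasurable_const, ⟨1, by simp⟩, by simp⟩
  | succ n ih =>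
    intro hn
    obtain ⟨hmeas, ⟨K, hK⟩, hint⟩ := ih (by omega)
    have hD := hdiff n (by omega)
    set D : Ω → ℝ := fun ω => Z (n + 1) ω - Z n ω with hDdef
    have hvn : v n = μ[fun ω => (D ω) ^ 2 | ℱ n] := hv n
    have hvm : StronglyMeasurable[ℱ n] (v n) := by rw [hvn]; exact stronglyMeasurable_condExp
    have hv0 : ∀ᵐ ω ∂μ, 0 ≤ v n ω := by
      rw [hvn]; exact condExp_nonneg (Filter.Eventually.of_forall fun ω => sq_nonneg (D ω))
    have hDm : StronglyMeasurable[ℱ (n + 1)] D :=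
      (hmart.1 (n + 1)).sub ((hmart.1 n).mono (ℱ.mono (Nat.le_succ n)))
    -- the F_n-measurable prefactor
    set N : Ω → ℝ := fun ω => M n ω * Real.exp (-(C / g * (v n ω - η) + Real.log g)) with hN
    have hNm : StronglyMeasurable[ℱ n] N :=
      hmeas.mul (Real.continuous_exp.comp_stronglyMeasurable
        (((hvm.sub stronglyMeasurable_const).const_mul (C / g)).add stronglyMeasurable_const).neg)
    have hM0 : ∀ n ω, 0 ≤ M n ω := fun n ω => by rw [hM]; exact (Real.exp_pos _).le
    have hN0 : ∀ ω, 0 ≤ N ω := fun ω => mul_nonneg (hM0 n ω) (Real.exp_pos _).le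
    have hCg : 0 ≤ C / g := by positivity
    have hNK : ∀ᵐ ω ∂μ, N ω ≤ K * Real.exp (C / g * η - Real.log g) := by
      filter_upwards [hK, hv0] with ω h1 h2
      apply mul_le_mul h1 _ (Real.exp_pos _).le ((hM0 n ω).trans h1)
      apply Real.exp_le_exp.2
      nlinarith [mul_nonneg hCg h2]
    set K' := K * Real.exp (C / g * η - Real.log g) with hK'
    have hMN : M (n + 1) = fun ω => N ω * Real.exp (lam * D ω) := by
      funext ω
      simp only [hN, hM, hDdef, Finset.sum_range_succ, ← Real.exp_add]
      congr 1
      ring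
    have hMm : StronglyMeasurable[ℱ (n + 1)] (M (n + 1)) := by
      rw [hMN]
      exact (hNm.mono (ℱ.mono (Nat.le_succ n))).mul
        (Real.continuous_exp.comp_stronglyMeasurable (hDm.const_mul lam))
    have hMb : ∀ᵐ ω ∂μ, M (n + 1) ω ≤ K' * Real.exp lam := by
      rw [hMN]
      filter_upwards [hNK, hD] with ω h1 h2
      apply mul_le_mul h1 _ (Real.exp_pos _).le ((hN0 ω).trans h1)
      apply Real.exp_le_exp.2
      nlinarith [(abs_le.1 h2).2]
    refine ⟨hMm, ⟨_, hMb⟩, le_trans ?_ hint⟩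
    have hNm0 : AEStronglyMeasurable N μ := (hNm.mono (ℱ.le n)).aestronglyMeasurable
    have hNb : ∀ᵐ ω ∂μ, ‖N ω‖ ≤ K' := by
      filter_upwards [hNK] with ω h
      rwa [Real.norm_of_nonneg (hN0 ω)]
    have hMint : Integrable (M (n + 1)) μ :=
      Integrable.of_bound (hMm.mono (ℱ.le _)).aestronglyMeasurable (K' * Real.exp lam) (by
        filter_upwards [hMb] with ω h
        rwa [Real.norm_of_nonneg (hM0 _ ω)])
    have hMnint : Integrable (M n) μ :=
      Integrable.of_bound (hmeas.mono (ℱ.le _)).aestronglyMeasurable K (by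
        filter_upwards [hK] with ω h
        rwa [Real.norm_of_nonneg (hM0 _ ω)])
    have hDint : Integrable D μ := (hmart.integrable (n + 1)).sub (hmart.integrable n)
    have hD2int : Integrable (fun ω => (D ω) ^ 2) μ :=
      Integrable.of_bound ((hDm.mono (ℱ.le _)).pow 2).aestronglyMeasurable 1 (by
        filter_upwards [hD] with ω h
        rw [Real.norm_of_nonneg (sq_nonneg _), ← sq_abs]
        exact pow_le_one₀ (abs_nonneg _) h)
    set Q : Ω → ℝ := (fun _ => A) + (B • D) + (C • fun ω => (D ω) ^ 2) with hQ
    have hQint : Integrable Q μ :=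
      ((integrable_const A).add (hDint.smul B)).add (hD2int.smul C)
    have hNQ : Integrable (N * Q) μ := hQint.bdd_mul hNm0 hNb
    have hcD : μ[D | ℱ n] =ᵐ[μ] 0 := by
      have h1 : μ[D | ℱ n] =ᵐ[μ] μ[Z (n + 1) | ℱ n] - μ[Z n | ℱ n] :=
        condExp_sub (hmart.integrable (n + 1)) (hmart.integrable n) (ℱ n)
      filter_upwards [h1, hmart.condExp_ae_eq (Nat.le_succ n), hmart.condExp_ae_eq (le_refl n)]
        with ω h1 h2 h3
      rw [h1, Pi.sub_apply, h2, h3]; simp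
    have hcQ : μ[Q | ℱ n] =ᵐ[μ] fun ω => A + C * v n ω := by
      have h1 := condExp_add ((integrable_const A).add (hDint.smul B)) (hD2int.smul C) (ℱ n)
      have h2 := condExp_add (integrable_const (μ := μ) A) (hDint.smul B) (ℱ n)
      have h3 := condExp_smul (μ := μ) B D (ℱ n)
      have h4 := condExp_smul (μ := μ) C (fun ω => (D ω) ^ 2) (ℱ n)
      have h5 : μ[(fun _ : Ω => A) | ℱ n] = fun _ => A := condExp_const (ℱ.le n) A
      filter_upwards [h1, h2, h3, h4, hcD] with ω h1 h2 h3 h4 h6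
      rw [hQ, h1, Pi.add_apply, h2, Pi.add_apply, h3, h4, h5, hvn]
      simp [h6]
    have hcNQ : μ[N * Q | ℱ n] =ᵐ[μ] fun ω => N ω * (A + C * v n ω) := by
      have h1 := condExp_mul_of_stronglyMeasurable_left hNm hNQ hQint
      filter_upwards [h1, hcQ] with ω h1 h2
      rw [h1, Pi.mul_apply, h2]
    calc ∫ ω, M (n + 1) ω ∂μ ≤ ∫ ω, (N * Q) ω ∂μ := by
          apply integral_mono_ae hMint hNQ
          filter_upwards [hD] with ω h
          rw [hMN]
          have := hquad (D ω) (abs_le.1 h).2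
          simp only [hQ, Pi.mul_apply, Pi.add_apply, Pi.smul_apply, smul_eq_mul]
          exact mul_le_mul_of_nonneg_left this (hN0 ω)
      _ = ∫ ω, (μ[N * Q | ℱ n]) ω ∂μ := (integral_condExp (ℱ.le n)).symm
      _ ≤ ∫ ω, M n ω ∂μ := by
          apply integral_mono_ae integrable_condExp hMnint
          filter_upwards [hcNQ] with ω h
          rw [h]
          have h1 : A + C * v n ω ≤ Real.exp (C / g * (v n ω - η) + Real.log g) := by
            rw [Real.exp_add, Real.exp_log hg]
            have h2 := Real.add_one_le_exp (C / g * (v n ω - η))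
            have h3 : A + C * v n ω = (C / g * (v n ω - η) + 1) * g := by
              field_simp
              rw [hgA]; ring
            rw [h3]
            exact mul_le_mul_of_nonneg_right h2 hg.le
          calc N ω * (A + C * v n ω)
              ≤ N ω * Real.exp (C / g * (v n ω - η) + Real.log g) :=
                mul_le_mul_of_nonneg_left h1 (hN0 ω)
            _ = M n ω := by
                simp only [hN]
                rw [mul_assoc, ← Real.exp_add]
                simp

/-- **Theorem 2, upper tail, round-martingale form.** For a real-valued
martingale `(Z_ℓ)_{ℓ=0,…,k}` with `Z_0 = k·α`, increments bounded by `1` in absolute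
value, and total conditional variance at most `k·η` almost surely, one has
`P[Z_k − Z_0 ≥ k·δ] ≤ π*(η,δ,k)`. -/
theorem theorem2_upper_tail
    {Ω : Type*} {m0 : MeasurableSpace Ω} {μ : Measure Ω} [IsProbabilityMeasure μ]
    (ℱ : Filtration ℕ m0) (k : ℕ) (hk : 1 ≤ k)
    (Z : ℕ → Ω → ℝ) (hmart : Martingale Z ℱ μ)
    (α : ℝ) (hα : α ∈ Set.Icc (0 : ℝ) 1)
    (hstart : ∀ᵐ ω ∂μ, Z 0 ω = k * α)
    (hdiff : ∀ ℓ, 1 ≤ ℓ → ℓ ≤ k → ∀ᵐ ω ∂μ, |Z ℓ ω - Z (ℓ - 1) ω| ≤ 1)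
    (η : ℝ) (hη : 0 < η)
    (hvar : ∀ᵐ ω ∂μ,
      ∑ ℓ ∈ Finset.Icc 1 k,
        (μ[fun ω' => (Z ℓ ω' - Z (ℓ - 1) ω') ^ 2 | ℱ (ℓ - 1)]) ω ≤ k * η)
    (δ : ℝ) (hδ0 : 0 < δ) (hδ1 : δ < 1) :
    μ {ω | k * δ ≤ Z k ω - Z 0 ω} ≤ ENNReal.ofReal (piStar η δ k) := by
  set s := 1 + η with hs
  have hs0 : 0 < s := by positivity
  have h1δ : 0 < 1 - δ := by linarith
  set E := (η + δ) / (η * (1 - δ)) with hE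
  have hE1 : 1 < E := by
    rw [hE, one_lt_div (by positivity)]
    nlinarith [mul_pos hη hδ0]
  set lam := Real.log E / s with hlamdef
  have hlogE : 0 < Real.log E := Real.log_pos hE1
  have hlam : 0 < lam := div_pos hlogE hs0
  have hls : lam * s = Real.log E := by rw [hlamdef]; field_simp
  have hexp : Real.exp (lam * s) = E := by rw [hls, Real.exp_log (by linarith)]
  set c := (Real.exp (lam * s) - 1 - lam * s) / (lam * s) ^ 2 * lam ^ 2 with hc
  have hc0 : 0 ≤ c := by
    have := Real.add_one_le_exp (lam * s)
    apply mul_nonneg (div_nonneg (by linarith) (sq_nonneg _)) (sq_nonneg _)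
  set e := Real.exp (-(lam * η)) with he
  have he0 : 0 < e := Real.exp_pos _
  have hcs : c * s ^ 2 = E - 1 - lam * s := by
    rw [hc, hexp]; field_simp
  set g := e / (1 - δ) with hg
  have hg0 : 0 < g := div_pos he0 h1δ
  have hgA : g = e * (1 + lam * η + c * η ^ 2) + e * c * η := by
    have h1 : c * η * s = η * (E - 1 - lam * s) / s := by
      rw [← hcs]; field_simp
    have h2 : 1 + lam * η + c * η * s = 1 / (1 - δ) := by
      rw [h1]
      have h3 : η * E = (η + δ) / (1 - δ) := by rw [hE]; field_simp
      have h4 : η * (E - 1 - lam * s) / s = ((η + δ) / (1 - δ) - η) / s - lam * η := by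
        rw [← h3]; field_simp
      rw [h4, hs]
      have : (1 + η) ≠ 0 := by positivity
      field_simp
      ring
    rw [hg, div_eq_mul_one_div, ← h2, hs]; ring
  have hquad : ∀ x ≤ (1 : ℝ), Real.exp (lam * x) ≤
      e * (1 + lam * η + c * η ^ 2) + e * (lam + 2 * c * η) * x + e * c * x ^ 2 := by
    intro x hx
    have h1 := aux_quad (u := lam * (x + η)) (w := lam * s) (by positivity)
      (mul_le_mul_of_nonneg_left (by linarith) hlam.le)
    have h2 : Real.exp (lam * x) = e * Real.exp (lam * (x + η)) := by
      rw [he, ← Real.exp_add]; congr 1; ring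
    rw [h2]
    refine (mul_le_mul_of_nonneg_left h1 he0.le).trans (le_of_eq ?_)
    rw [mul_pow lam (x + η), ← mul_assoc ((Real.exp (lam * s) - 1 - lam * s) / (lam * s) ^ 2), ← hc]
    ring
  obtain ⟨hMm, ⟨K, hK⟩, hint⟩ := aux_super_s3 ℱ k Z hmart
    (fun n hn => by simpa using hdiff (n + 1) (by omega) (by omega))
    η lam _ _ _ g hlam.le (mul_nonneg he0.le hc0) hg0 hgA hquad
    (fun n => μ[fun ω => (Z (n + 1) ω - Z n ω) ^ 2 | ℱ n]) (fun n => rfl) _ (fun n => rfl) k le_rfl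
  set M : Ω → ℝ := fun ω => Real.exp (lam * (Z k ω - Z 0 ω)
      - ∑ i ∈ Finset.range k, (e * c / g *
        ((μ[fun ω => (Z (i + 1) ω - Z i ω) ^ 2 | ℱ i]) ω - η) + Real.log g)) with hM
  have hM0 : ∀ ω, 0 ≤ M ω := fun ω => (Real.exp_pos _).le
  have hMint : Integrable M μ :=
    Integrable.of_bound (hMm.mono (ℱ.le _)).aestronglyMeasurable K (by
      filter_upwards [hK] with ω h
      rw [Real.norm_of_nonneg (hM0 ω)]; exact h)
  set T := Real.exp (lam * (k * δ) - k * Real.log g) with hT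
  have hT0 : 0 < T := Real.exp_pos _
  have hsub : μ {ω | k * δ ≤ Z k ω - Z 0 ω} ≤ μ {ω | T ≤ M ω} := by
    apply measure_mono_ae
    filter_upwards [hvar] with ω hω hmem
    change k * δ ≤ Z k ω - Z 0 ω at hmem
    change T ≤ M ω
    rw [← Finset.Ico_add_one_right_eq_Icc, Finset.sum_Ico_eq_sum_range] at hω
    have hω' : ∑ i ∈ Finset.range k, (μ[fun ω => (Z (i + 1) ω - Z i ω) ^ 2 | ℱ i]) ω ≤ k * η := by
      refine le_trans (le_of_eq ?_) hω
      apply Finset.sum_congr (by simp)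
      intro i _
      simp only [Nat.add_sub_cancel_left, add_comm 1 i, Nat.add_sub_cancel]
    apply Real.exp_le_exp.2
    rw [Finset.sum_add_distrib, ← Finset.mul_sum, Finset.sum_sub_distrib]
    simp only [Finset.sum_const, Finset.card_range, nsmul_eq_mul]
    have h1 := mul_le_mul_of_nonneg_left hmem hlam.le
    have h2 : 0 ≤ e * c / g := by positivity
    have h3 := mul_nonneg h2 (sub_nonneg.2 hω')
    linarith
  have hmarkov := mul_meas_ge_le_integral_of_nonneg
    (Filter.Eventually.of_forall hM0) hMint T
  have hreal : μ.real {ω | T ≤ M ω} ≤ T⁻¹ := by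
    rw [← one_div, le_div_iff₀ hT0, mul_comm]
    exact hmarkov.trans hint
  have hTpi : T⁻¹ = piStar η δ k := by
    rw [hT, piStar, ← Real.exp_neg]
    congr 1
    have hq : (η + δ) / (1 + η) / (η / (1 + η)) = (η + δ) / η := by field_simp
    have hq' : (1 - (η + δ) / (1 + η)) / (1 - η / (1 + η)) = 1 - δ := by
      have h1 : 1 - (η + δ) / (1 + η) = (1 - δ) / (1 + η) := by field_simp; ring
      have h2 : 1 - η / (1 + η) = 1 / (1 + η) := by field_simp; ring
      rw [h1, h2]; field_simp
    rw [klDiv, hq, hq', hg, Real.log_div he0.ne' h1δ.ne', he, Real.log_exp]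
    have hl : Real.log ((η + δ) / η) = lam * s + Real.log (1 - δ) := by
      rw [hls, hE, ← Real.log_mul (by positivity) h1δ.ne']
      congr 1; field_simp
    rw [hl, hs]
    field_simp
    ring
  refine hsub.trans ?_
  rw [← hTpi, ← ofReal_measureReal]
  exact ENNReal.ofReal_le_ofReal hreal
end

section
/- (Theorem 2, lower tail, round-martingale form.) Let k ≥ 1 and let (Z_ℓ)_{ℓ=0,…,k} be a real-valued martingale adapted to a filtration (F_ℓ) with Z_0 = k·α almost surely for a constant α ∈ [0,1], such that |Z_ℓ − Z_{ℓ−1}| ≤ 1 almost surely for every ℓ, and such that Σ_{ℓ=1}^k E[(Z_ℓ − Z_{ℓ−1})² | F_{ℓ−1}] ≤ k·η almost surely for a constant η with 0 < η. Then for every δ with 0 < δ < 1, P[Z_k − Z_0 ≤ −k·δ] ≤ π*(η, δ, k). -/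
open MeasureTheory ProbabilityTheory Real

lemma aux_exp_integral (u : ℝ) :
    ∫ t in (0:ℝ)..1, u ^ 2 * ((1 - t) * exp (t * u)) = exp u - 1 - u := by
  have h : ∀ t ∈ Set.uIcc (0:ℝ) 1,
      HasDerivAt (fun t => u * (1 - t) * exp (t * u) + exp (t * u))
        (u ^ 2 * ((1 - t) * exp (t * u))) t := by
    intro t _
    have h1 : HasDerivAt (fun t : ℝ => exp (t * u)) (exp (t * u) * (1 * u)) t :=
      ((hasDerivAt_id t).mul_const u).exp
    have h2 : HasDerivAt (fun t : ℝ => u * (1 - t)) (u * (-1)) t :=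
      ((hasDerivAt_id t).const_sub 1).const_mul u
    have h3 := (h2.mul h1).add h1
    have e : u * (-1) * exp (t * u) + u * (1 - t) * (exp (t * u) * (1 * u))
        + exp (t * u) * (1 * u) = u ^ 2 * ((1 - t) * exp (t * u)) := by ring
    rw [← e]
    exact h3
  rw [intervalIntegral.integral_eq_sub_of_hasDerivAt h]
  · simp; ring
  · exact Continuous.intervalIntegrable (by fun_prop) _ _

lemma aux_phi (u U : ℝ) (h : u ≤ U) :
    (exp u - 1 - u) * U ^ 2 ≤ u ^ 2 * (exp U - 1 - U) := by
  rw [← aux_exp_integral u, ← aux_exp_integral U, ← intervalIntegral.integral_mul_const,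
    ← intervalIntegral.integral_const_mul]
  apply intervalIntegral.integral_mono_on (by norm_num)
  · exact Continuous.intervalIntegrable (by fun_prop) _ _
  · exact Continuous.intervalIntegrable (by fun_prop) _ _
  · intro t ht
    have h1 : exp (t * u) ≤ exp (t * U) :=
      exp_le_exp.2 (mul_le_mul_of_nonneg_left h ht.1)
    have h2 : 0 ≤ u ^ 2 * U ^ 2 * (1 - t) := mul_nonneg (by positivity) (by linarith [ht.2])
    nlinarith [mul_le_mul_of_nonneg_left h1 h2]

lemma aux_params (η δ : ℝ) (hη : 0 < η) (hδ0 : 0 < δ) (hδ1 : δ < 1) (k : ℕ) :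
    ∃ l A B C G c : ℝ, 0 ≤ l ∧ 0 ≤ c ∧ 0 < G ∧
      (∀ x ≤ 1, exp (l * x) ≤ A + B * x + C * x ^ 2) ∧
      (∀ v, A + C * v ≤ G * exp (c * (v - η))) ∧
      (G * exp (-(l * δ))) ^ k = piStar η δ k := by
  have hr : 0 < (η + δ) / (η * (1 - δ)) :=
    div_pos (by linarith) (mul_pos hη (by linarith))
  have hr1 : 1 < (η + δ) / (η * (1 - δ)) := by
    rw [lt_div_iff₀ (mul_pos hη (by linarith))]
    nlinarith
  obtain ⟨l, hl⟩ : ∃ l, l = log ((η + δ) / (η * (1 - δ))) / (1 + η) := ⟨_, rfl⟩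
  have hl0 : 0 < l := by
    rw [hl]; exact div_pos (log_pos hr1) (by linarith)
  have hη1 : (1 + η) ≠ 0 := by linarith
  have hδ1' : (1 - δ) ≠ 0 := by linarith
  have hU : l * (1 + η) = log ((η + δ) / (η * (1 - δ))) := by
    rw [hl]; field_simp
  have heU : exp (l * (1 + η)) = (η + δ) / (η * (1 - δ)) := by
    rw [hU, exp_log hr]
  have hUpos : 0 < l * (1 + η) := by positivity
  obtain ⟨K, hK⟩ : ∃ K, K = (exp (l * (1 + η)) - 1 - l * (1 + η)) / (l * (1 + η)) ^ 2 := ⟨_, rfl⟩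
  have hK0 : 0 ≤ K := by
    rw [hK]
    apply div_nonneg _ (by positivity)
    linarith [add_one_le_exp (l * (1 + η))]
  have hKe : K * (l * (1 + η)) ^ 2 = exp (l * (1 + η)) - 1 - l * (1 + η) := by
    rw [hK]; field_simp
  obtain ⟨G, hG⟩ : ∃ G, G = exp (-(l * η)) / (1 - δ) := ⟨_, rfl⟩
  have hG0 : 0 < G := by rw [hG]; exact div_pos (exp_pos _) (by linarith)
  obtain ⟨E, hE⟩ : ∃ E, E = exp (-(l * η)) := ⟨_, rfl⟩
  have hE0 : 0 < E := by rw [hE]; exact exp_pos _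
  refine ⟨l, E * (1 + l * η + K * l ^ 2 * η ^ 2), E * (l + 2 * K * l ^ 2 * η), E * (K * l ^ 2),
    G, E * (K * l ^ 2) / G, hl0.le, by positivity, hG0, ?_, ?_, ?_⟩
  · intro x hx
    have h1 := aux_phi (l * (x + η)) (l * (1 + η)) (by gcongr)
    rw [← hKe] at h1
    have h2 : exp (l * (x + η)) - 1 - l * (x + η) ≤ (l * (x + η)) ^ 2 * K := by
      apply le_of_mul_le_mul_right _ (pow_pos hUpos 2)
      linarith
    have h3 : exp (l * x) = E * exp (l * (x + η)) := by
      rw [hE, ← exp_add]; congr 1; ring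
    rw [h3]
    have := mul_le_mul_of_nonneg_left h2 hE0.le
    linarith
  · intro v
    have h1 := add_one_le_exp (E * (K * l ^ 2) / G * (v - η))
    have h2 := mul_le_mul_of_nonneg_left h1 hG0.le
    have h3 : G * (E * (K * l ^ 2) / G * (v - η) + 1) = E * (K * l ^ 2) * (v - η) + G := by
      field_simp
    have h4 : E * (1 + l * η + K * l ^ 2 * η ^ 2) + E * (K * l ^ 2) * η = G := by
      rw [hG, ← hE]
      have h5 : K * l ^ 2 * (1 + η) = ((η + δ) / (η * (1 - δ)) - 1 - l * (1 + η)) / (1 + η) := by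
        rw [← heU, ← hKe]; field_simp
      have h6 : E * (1 + l * η + K * l ^ 2 * η ^ 2) + E * (K * l ^ 2) * η
        = E * (1 + l * η + η * (K * l ^ 2 * (1 + η))) := by ring
      rw [h6, h5]
      field_simp
      ring
    linarith
  · unfold piStar klDiv
    have e1 : (η + δ) / (1 + η) / (η / (1 + η)) = (η + δ) / η := by field_simp
    have e2 : (1 - (η + δ) / (1 + η)) / (1 - η / (1 + η)) = 1 - δ := by field_simp; ring
    rw [e1, e2, mul_comm _ (k : ℝ), exp_nat_mul]
    congr 1
    have e3 : G = exp (-(l * η) - log (1 - δ)) := by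
      rw [hG, exp_sub, exp_log (by linarith)]
    rw [e3, ← exp_add]
    congr 1
    have e4 : l * (1 + η) = log ((η + δ) / η) - log (1 - δ) := by
      rw [hU, ← div_div, log_div _ hδ1']
      exact (div_pos (by linarith) hη).ne'
    have e5 : l = (log ((η + δ) / η) - log (1 - δ)) / (1 + η) := by
      rw [← e4]; field_simp
    rw [e5]
    field_simp
    ring

lemma aux_step {Ω : Type*} (m : MeasurableSpace Ω) {m0 : MeasurableSpace Ω} {μ : Measure Ω}
    [IsProbabilityMeasure μ] (hm : m ≤ m0) (Y X : Ω → ℝ)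
    (hY : StronglyMeasurable[m] Y) (hY0 : ∀ ω, 0 ≤ Y ω) (R : ℝ) (hYR : ∀ᵐ ω ∂μ, Y ω ≤ R)
    (hX : AEStronglyMeasurable X μ) (hX1 : ∀ᵐ ω ∂μ, |X ω| ≤ 1) (hX0 : μ[X | m] =ᵐ[μ] 0)
    (l A B C : ℝ) (hq : ∀ x ≤ 1, exp (l * x) ≤ A + B * x + C * x ^ 2) :
    ∫ ω, Y ω * exp (l * X ω) ∂μ ≤ ∫ ω, Y ω * (A + C * (μ[fun ω => X ω ^ 2 | m]) ω) ∂μ := by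
  have hYm : AEStronglyMeasurable Y μ := (hY.mono hm).aestronglyMeasurable
  have hYb : ∀ᵐ ω ∂μ, ‖Y ω‖ ≤ R := by
    filter_upwards [hYR] with ω h
    rwa [Real.norm_of_nonneg (hY0 ω)]
  have hXi : Integrable X μ := Integrable.of_bound hX 1 hX1
  have hX2i : Integrable (fun ω => X ω ^ 2) μ := by
    refine Integrable.of_bound (hX.pow 2) 1 ?_
    filter_upwards [hX1] with ω h
    rw [norm_pow, Real.norm_eq_abs]
    exact pow_le_one₀ (abs_nonneg _) h
  have hei : Integrable (fun ω => exp (l * X ω)) μ := by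
    refine Integrable.of_bound
      (continuous_exp.comp_aestronglyMeasurable (hX.const_mul l)) (exp |l|) ?_
    filter_upwards [hX1] with ω h
    rw [Real.norm_of_nonneg (exp_pos _).le]
    apply exp_le_exp.2
    calc l * X ω ≤ |l * X ω| := le_abs_self _
      _ = |l| * |X ω| := abs_mul _ _
      _ ≤ |l| * 1 := by gcongr
      _ = |l| := mul_one _
  have hgi : Integrable ((fun _ => A) + B • X + C • (fun ω => X ω ^ 2)) μ :=
    ((integrable_const A).add (hXi.smul B)).add (hX2i.smul C)
  have hYg : Integrable (Y * ((fun _ => A) + B • X + C • (fun ω => X ω ^ 2))) μ :=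
    hgi.bdd_mul hYm hYb
  have hce : μ[(fun _ => A) + B • X + C • (fun ω => X ω ^ 2) | m] =ᵐ[μ]
      fun ω => A + C * (μ[fun ω => X ω ^ 2 | m]) ω := by
    have h1 := condExp_add ((integrable_const A).add (hXi.smul B)) (hX2i.smul C) m
    have h2 := condExp_add (integrable_const (μ := μ) A) (hXi.smul B) m
    have h3 := condExp_smul (μ := μ) B X m
    have h4 := condExp_smul (μ := μ) C (fun ω => X ω ^ 2) m
    filter_upwards [h1, h2, h3, h4, hX0] with ω h1 h2 h3 h4 h5
    rw [h1, Pi.add_apply, h2, Pi.add_apply, h3, h4, condExp_const hm]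
    simp [h5]
  calc ∫ ω, Y ω * exp (l * X ω) ∂μ
      ≤ ∫ ω, (Y * ((fun _ => A) + B • X + C • (fun ω => X ω ^ 2)) : Ω → ℝ) ω ∂μ := by
        apply integral_mono_ae (hei.bdd_mul hYm hYb) hYg
        filter_upwards [hX1] with ω h
        have := hq (X ω) (le_of_abs_le h)
        exact mul_le_mul_of_nonneg_left this (hY0 ω)
    _ = ∫ ω, (μ[Y * ((fun _ => A) + B • X + C • (fun ω => X ω ^ 2)) | m]) ω ∂μ :=
        (integral_condExp hm).symm
    _ = _ := by
        apply integral_congr_ae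
        filter_upwards [condExp_mul_of_stronglyMeasurable_left hY hYg hgi, hce] with ω h1 h2
        rw [h1, Pi.mul_apply, h2]

lemma aux_main
    {Ω : Type*} {m0 : MeasurableSpace Ω} {μ : Measure Ω} [IsProbabilityMeasure μ]
    (ℱ : Filtration ℕ m0) (k : ℕ)
    (Z : ℕ → Ω → ℝ) (hmart : Martingale Z ℱ μ)
    (hdiff : ∀ i < k, ∀ᵐ ω ∂μ, |Z i ω - Z (i + 1) ω| ≤ 1)
    (v : ℕ → Ω → ℝ) (hv : ∀ i, v i = μ[fun ω => (Z i ω - Z (i + 1) ω) ^ 2 | ℱ i])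
    (η l A B C G c : ℝ) (hl : 0 ≤ l) (hc : 0 ≤ c) (hG : 0 < G)
    (hq : ∀ x ≤ 1, exp (l * x) ≤ A + B * x + C * x ^ 2)
    (hg : ∀ v, A + C * v ≤ G * exp (c * (v - η))) (n : ℕ) (hn : n ≤ k) :
    Integrable (fun ω => exp (l * (Z 0 ω - Z n ω) - c * ∑ i ∈ Finset.range n, v i ω)) μ ∧
    ∫ ω, exp (l * (Z 0 ω - Z n ω) - c * ∑ i ∈ Finset.range n, v i ω) ∂μ
      ≤ (G * exp (-(c * η))) ^ n := by
  have hv0 : ∀ᵐ ω ∂μ, ∀ i, 0 ≤ v i ω := by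
    rw [ae_all_iff]; intro i; rw [hv i]
    exact condExp_nonneg (ae_of_all _ fun ω => sq_nonneg _)
  have hvm : ∀ i, StronglyMeasurable[ℱ i] (v i) := fun i => by
    rw [hv i]; exact stronglyMeasurable_condExp
  have hvm' : ∀ i n, i ≤ n → StronglyMeasurable[ℱ n] (v i) := fun i n h =>
    (hvm i).mono (ℱ.mono h)
  have hZm : ∀ i n, i ≤ n → StronglyMeasurable[ℱ n] (Z i) := fun i n h =>
    (hmart.1 i).mono (ℱ.mono h)
  have hS : ∀ n ≤ k, ∀ᵐ ω ∂μ, Z 0 ω - Z n ω ≤ n := by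
    intro n
    induction n with
    | zero => intro _; simp
    | succ n ih =>
      intro h
      filter_upwards [ih (by omega), hdiff n (by omega)] with ω h1 h2
      push_cast
      linarith [le_of_abs_le h2]
  have hVm : ∀ n j, n ≤ j + 1 → StronglyMeasurable[ℱ j] (fun ω => ∑ i ∈ Finset.range n, v i ω) := by
    intro n j h
    apply Finset.stronglyMeasurable_fun_sum
    intro i hi
    exact hvm' i j (by have := Finset.mem_range.1 hi; omega)
  have hYm : ∀ n p j, n ≤ j → p ≤ j + 1 → StronglyMeasurable[ℱ j]
      (fun ω => exp (l * (Z 0 ω - Z n ω) - c * ∑ i ∈ Finset.range p, v i ω)) := by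
    intro n p j h h'
    exact continuous_exp.comp_stronglyMeasurable
      ((((hZm 0 j (by omega)).sub (hZm n j h)).const_mul l).sub ((hVm p j h').const_mul c))
  have hYb : ∀ n ≤ k, ∀ p, ∀ᵐ ω ∂μ,
      exp (l * (Z 0 ω - Z n ω) - c * ∑ i ∈ Finset.range p, v i ω) ≤ exp (l * n) := by
    intro n h p
    filter_upwards [hS n h, hv0] with ω h1 h2
    apply exp_le_exp.2
    have := mul_le_mul_of_nonneg_left h1 hl
    have := mul_nonneg hc (Finset.sum_nonneg (s := Finset.range p) (fun i _ => h2 i))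
    linarith
  have hIntg : ∀ n ≤ k, Integrable
      (fun ω => exp (l * (Z 0 ω - Z n ω) - c * ∑ i ∈ Finset.range n, v i ω)) μ := by
    intro n h
    refine Integrable.of_bound
      ((hYm n n n le_rfl (by omega)).mono (ℱ.le n)).aestronglyMeasurable (exp (l * n)) ?_
    filter_upwards [hYb n h n] with ω h1
    rwa [Real.norm_of_nonneg (exp_pos _).le]
  refine ⟨hIntg n hn, ?_⟩
  induction n with
  | zero => simp
  | succ n ih =>
    have ih' := ih (by omega)
    have hX : AEStronglyMeasurable (fun ω => Z n ω - Z (n + 1) ω) μ :=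
      ((hmart.integrable n).sub (hmart.integrable (n + 1))).aestronglyMeasurable
    have hX0 : μ[fun ω => Z n ω - Z (n + 1) ω | ℱ n] =ᵐ[μ] 0 := by
      have h1 := condExp_sub (hmart.integrable n) (hmart.integrable (n + 1)) (ℱ n)
      have h2 := hmart.2 n n le_rfl
      have h3 := hmart.2 n (n + 1) (by omega)
      change μ[Z n - Z (n + 1) | ℱ n] =ᵐ[μ] 0
      filter_upwards [h1, h2, h3] with ω h1 h2 h3
      rw [h1, Pi.sub_apply, h2, h3]; simp
    have hs := aux_step (μ := μ) (ℱ n) (ℱ.le n) _ (fun ω => Z n ω - Z (n + 1) ω)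
      (hYm n (n + 1) n le_rfl le_rfl)
      (fun ω => (exp_pos _).le) _ (hYb n (by omega) (n + 1)) hX (hdiff n (by omega)) hX0 l A B C hq
    rw [← hv n] at hs
    calc _ = ∫ ω, exp (l * (Z 0 ω - Z n ω) - c * ∑ i ∈ Finset.range (n + 1), v i ω)
              * exp (l * (Z n ω - Z (n + 1) ω)) ∂μ := by
          congr 1; ext ω; rw [← exp_add]; congr 1; ring
      _ ≤ _ := hs
      _ ≤ ∫ ω, (G * exp (-(c * η))) *
            exp (l * (Z 0 ω - Z n ω) - c * ∑ i ∈ Finset.range n, v i ω) ∂μ := by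
          have hvi : Integrable (fun ω => A + C * v n ω) μ := by
            rw [hv n]; exact (integrable_const A).add (integrable_condExp.const_mul C)
          refine integral_mono_ae (hvi.bdd_mul (c := exp (l * n))
            ((hYm n (n + 1) n le_rfl le_rfl).mono (ℱ.le n)).aestronglyMeasurable ?_)
            ((hIntg n (by omega)).const_mul _) (ae_of_all _ fun ω => ?_)
          · filter_upwards [hYb n (by omega) (n + 1)] with ω h1
            rwa [Real.norm_of_nonneg (exp_pos _).le]
          · refine (mul_le_mul_of_nonneg_left (hg (v n ω)) (exp_pos _).le).trans_eq ?_
            beta_reduce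
            rw [Finset.sum_range_succ, mul_left_comm, mul_assoc, ← exp_add, ← exp_add]
            congr 2; ring
      _ ≤ _ := by
          rw [integral_const_mul, pow_succ']
          exact mul_le_mul_of_nonneg_left ih' (by positivity)

/-- **Theorem 2, lower tail, round-martingale form.** For a real-valued
martingale `(Z_ℓ)_{ℓ=0,…,k}` with `Z_0 = k·α`, increments bounded by `1` in absolute
value, and total conditional variance at most `k·η` almost surely, one has
`P[Z_k − Z_0 ≤ −k·δ] ≤ π*(η,δ,k)`. -/
theorem theorem2_lower_tail
    {Ω : Type*} {m0 : MeasurableSpace Ω} {μ : Measure Ω} [IsProbabilityMeasure μ]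
    (ℱ : Filtration ℕ m0) (k : ℕ) (hk : 1 ≤ k)
    (Z : ℕ → Ω → ℝ) (hmart : Martingale Z ℱ μ)
    (α : ℝ) (hα : α ∈ Set.Icc (0 : ℝ) 1)
    (hstart : ∀ᵐ ω ∂μ, Z 0 ω = k * α)
    (hdiff : ∀ ℓ, 1 ≤ ℓ → ℓ ≤ k → ∀ᵐ ω ∂μ, |Z ℓ ω - Z (ℓ - 1) ω| ≤ 1)
    (η : ℝ) (hη : 0 < η)
    (hvar : ∀ᵐ ω ∂μ,
      ∑ ℓ ∈ Finset.Icc 1 k,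
        (μ[fun ω' => (Z ℓ ω' - Z (ℓ - 1) ω') ^ 2 | ℱ (ℓ - 1)]) ω ≤ k * η)
    (δ : ℝ) (hδ0 : 0 < δ) (hδ1 : δ < 1) :
    μ {ω | Z k ω - Z 0 ω ≤ -(k * δ)} ≤ ENNReal.ofReal (piStar η δ k) := by
  obtain ⟨l, A, B, C, G, c, hl, hc, hG, hq, hg, hfin⟩ := aux_params η δ hη hδ0 hδ1 k
  set v : ℕ → Ω → ℝ := fun i => μ[fun ω => (Z i ω - Z (i + 1) ω) ^ 2 | ℱ i] with hv
  obtain ⟨hIntg, hle⟩ := aux_main ℱ k Z hmart (fun i hi => by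
    filter_upwards [hdiff (i + 1) (by omega) (by omega)] with ω h
    rw [abs_sub_comm]; simpa using h) v (fun i => rfl) η l A B C G c hl hc hG hq hg k le_rfl
  have hvar' : ∀ᵐ ω ∂μ, ∑ i ∈ Finset.range k, v i ω ≤ k * η := by
    filter_upwards [hvar] with ω h
    refine le_trans (le_of_eq ?_) h
    rw [← Finset.Ico_add_one_right_eq_Icc, Finset.sum_Ico_eq_sum_range]
    refine Finset.sum_congr (by simp) fun i _ => ?_
    have e : (fun ω => (Z i ω - Z (i + 1) ω) ^ 2) = fun ω => (Z (i + 1) ω - Z i ω) ^ 2 := by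
      ext ω; ring
    simp only [hv, add_comm 1 i, Nat.add_sub_cancel, e]
  have hmk := mul_meas_ge_le_integral_of_nonneg (ae_of_all μ fun ω => (exp_pos _).le) hIntg
    (exp (l * (k * δ) - c * (k * η)))
  have hsub : μ {ω | Z k ω - Z 0 ω ≤ -(k * δ)} ≤ μ {ω | exp (l * (k * δ) - c * (k * η)) ≤
      exp (l * (Z 0 ω - Z k ω) - c * ∑ i ∈ Finset.range k, v i ω)} := by
    apply measure_mono_ae
    filter_upwards [hvar'] with ω h1 h2
    have h2' : Z k ω - Z 0 ω ≤ -(k * δ) := h2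
    change exp _ ≤ exp _
    apply exp_le_exp.2
    have h3 := mul_le_mul_of_nonneg_left h1 hc
    have h4 : l * (k * δ) ≤ l * (Z 0 ω - Z k ω) := mul_le_mul_of_nonneg_left (by linarith) hl
    linarith
  refine hsub.trans ?_
  rw [← ofReal_measureReal]
  apply ENNReal.ofReal_le_ofReal
  rw [← hfin]
  have h5 := hmk.trans hle
  refine le_of_mul_le_mul_left (h5.trans_eq ?_) (exp_pos (l * (k * δ) - c * (k * η)))
  have h6 : exp (l * (k * δ) - c * (k * η)) = exp (l * δ - c * η) ^ k := by
    rw [← exp_nat_mul]; congr 1; ring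
  rw [h6, ← mul_pow]
  congr 1
  rw [mul_left_comm, ← exp_add]
  congr 2; ring
end

section
/- (Bound on the expected total conditional variance of a subset's weight.) Let n ≥ k ≥ 1 and weights w^1,…,w^n ∈ [0,1/k] with Σ_{i=1}^n w^i = 1. Let (X_t)_{t=0,…,T} be a martingale with values in Δ := {x ∈ [0,1]^n : Σ_{i=1}^n x^i = k}, adapted to a filtration (F_t), with X_0 = k·w almost surely, X_T ∈ {0,1}^n almost surely, and such that for every t ≥ 1, almost surely the difference X_t − X_{t−1} vanishes in all but at most two coordinates. Then for every subset A ⊆ {1,…,n}, writing Y_t^A := Σ_{i∈A}(X_t^i − X_{t−1}^i), one has E[ Σ_{t=1}^T E[(Y_t^A)² | F_{t−1}] ] ≤ k·η, where η := Σ_{i∈A} w^i − k·Σ_{i∈A}(w^i)². -/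
open MeasureTheory ProbabilityTheory Real

lemma two_coord_sq_le {n : ℕ} (d : Fin n → ℝ) (h0 : ∑ l, d l = 0)
    (h : ∃ i j : Fin n, ∀ l, l ≠ i → l ≠ j → d l = 0) (A : Finset (Fin n)) :
    (∑ l ∈ A, d l) ^ 2 ≤ ∑ l ∈ A, d l ^ 2 := by
  obtain ⟨i, j, h⟩ := h
  by_cases hij : i = j
  · subst hij
    have hi : d i = 0 := by
      rw [← h0]
      exact (Fintype.sum_eq_single i (fun l hl => h l hl hl)).symm
    have hz : ∀ l, d l = 0 := fun l => by
      by_cases hl : l = i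
      · rw [hl, hi]
      · exact h l hl hl
    simp [hz]
  · have hs : d i + d j = 0 := by
      rw [← h0]
      exact (Fintype.sum_eq_add i j hij (fun l hl => h l hl.1 hl.2)).symm
    have hdj : d j = - d i := by linarith
    have e1 : ∀ l, d l = (if l = i then d i else 0) + (if l = j then - d i else 0) := by
      intro l
      by_cases h1 : l = i
      · subst h1; simp [hij]
      · by_cases h2 : l = j
        · subst h2; simp [h1, hdj]
        · simp [h1, h2, h l h1 h2]
    have e2 : ∀ l, d l ^ 2 = (if l = i then d i ^ 2 else 0) + (if l = j then d i ^ 2 else 0) := by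
      intro l
      by_cases h1 : l = i
      · subst h1; simp [hij]
      · by_cases h2 : l = j
        · subst h2; simp [h1, hdj]
        · simp [h1, h2, h l h1 h2]
    rw [Finset.sum_congr rfl (fun l _ => e1 l), Finset.sum_congr rfl (fun l _ => e2 l),
      Finset.sum_add_distrib, Finset.sum_add_distrib]
    simp only [Finset.sum_ite_eq']
    split_ifs <;> nlinarith [sq_nonneg (d i)]

lemma martingale_sq_diff {Ω : Type*} {m0 : MeasurableSpace Ω} {μ : Measure Ω}
    [IsProbabilityMeasure μ] (ℱ : Filtration ℕ m0) (M : ℕ → Ω → ℝ) (hM : Martingale M ℱ μ)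
    (s : ℕ) (h1 : MemLp (M s) 2 μ) (h2 : MemLp (M (s + 1)) 2 μ) :
    ∫ ω, (M (s + 1) ω - M s ω) ^ 2 ∂μ = ∫ ω, M (s + 1) ω ^ 2 ∂μ - ∫ ω, M s ω ^ 2 ∂μ := by
  have hi : Integrable (M s * M (s + 1)) μ := h1.integrable_mul h2
  have hc : μ[M s * M (s + 1) | ℱ s] =ᵐ[μ] M s * μ[M (s + 1) | ℱ s] :=
    condExp_mul_of_stronglyMeasurable_left (hM.1 s) hi (hM.integrable _)
  have hc2 : μ[M (s + 1) | ℱ s] =ᵐ[μ] M s := hM.2 s (s + 1) (Nat.le_succ s)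
  have key : ∫ ω, M s ω * M (s + 1) ω ∂μ = ∫ ω, M s ω ^ 2 ∂μ := by
    have : ∫ ω, (M s * M (s + 1)) ω ∂μ = ∫ ω, (μ[M s * M (s + 1) | ℱ s]) ω ∂μ :=
      (integral_condExp (ℱ.le s)).symm
    refine this.trans (integral_congr_ae ?_)
    filter_upwards [hc, hc2] with ω a b
    rw [a, Pi.mul_apply, b, sq]
  have hi' : Integrable (fun ω => M s ω * M (s + 1) ω) μ := hi
  have e : ∀ ω, (M (s + 1) ω - M s ω) ^ 2
      = M (s + 1) ω ^ 2 - 2 * (M s ω * M (s + 1) ω) + M s ω ^ 2 := fun ω => by ring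
  simp_rw [e]
  have hsub : Integrable (fun ω => M (s + 1) ω ^ 2 - 2 * (M s ω * M (s + 1) ω)) μ :=
    h2.integrable_sq.sub (hi'.const_mul 2)
  rw [integral_add hsub h1.integrable_sq,
    integral_sub h2.integrable_sq (hi'.const_mul 2), integral_const_mul, key]
  ring

/-- **Bound on the expected total conditional variance of a subset's
weight.** For a martingale `X` with values in `Δ = {x ∈ [0,1]^n : ∑ i, x^i = k}`,
starting at `k·w`, ending in `{0,1}^n`, and changing at most two coordinates at each
step, the expected total conditional variance of `Y_t^A := ∑_{i∈A}(X_t^i − X_{t−1}^i)`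
is at most `k·η` where `η = ∑_{i∈A} w^i − k·∑_{i∈A}(w^i)²`. -/
theorem expected_total_condVar_le
    {Ω : Type*} {m0 : MeasurableSpace Ω} {μ : Measure Ω} [IsProbabilityMeasure μ]
    (ℱ : Filtration ℕ m0) (n k : ℕ) (hk : 1 ≤ k) (hkn : k ≤ n)
    (w : Fin n → ℝ) (hw : ∀ i, w i ∈ Set.Icc (0 : ℝ) (1 / k))
    (hwsum : ∑ i, w i = 1)
    (T : ℕ) (X : ℕ → Ω → (Fin n → ℝ))
    (hmart : ∀ i : Fin n, Martingale (fun t ω => X t ω i) ℱ μ)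
    (hΔ : ∀ t ≤ T, ∀ᵐ ω ∂μ,
      (∀ i, X t ω i ∈ Set.Icc (0 : ℝ) 1) ∧ ∑ i, X t ω i = k)
    (hstart : ∀ᵐ ω ∂μ, ∀ i, X 0 ω i = k * w i)
    (hterm : ∀ᵐ ω ∂μ, ∀ i, X T ω i = 0 ∨ X T ω i = 1)
    (hpair : ∀ t, 1 ≤ t → t ≤ T → ∀ᵐ ω ∂μ, ∃ i j : Fin n,
      ∀ l, l ≠ i → l ≠ j → X t ω l = X (t - 1) ω l)
    (A : Finset (Fin n)) (η : ℝ)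
    (hη : η = (∑ i ∈ A, w i) - k * ∑ i ∈ A, (w i) ^ 2) :
    (∫ ω, (∑ t ∈ Finset.Icc 1 T,
        (μ[fun ω' => (∑ i ∈ A, (X t ω' i - X (t - 1) ω' i)) ^ 2 | ℱ (t - 1)]) ω) ∂μ)
      ≤ k * η := by
  have hL : ∀ t ≤ T, ∀ i, MemLp (fun ω => X t ω i) 2 μ := fun t ht i =>
    MemLp.of_bound ((hmart i).integrable t).aestronglyMeasurable 1 (by
      filter_upwards [hΔ t ht] with ω hω
      rw [Real.norm_eq_abs, abs_le]
      constructor <;> linarith [(hω.1 i).1, (hω.1 i).2])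
  have hstep : ∀ s, s + 1 ≤ T →
      ∫ ω, (∑ i ∈ A, (X (s + 1) ω i - X s ω i)) ^ 2 ∂μ
        ≤ (∑ i ∈ A, ∫ ω, X (s + 1) ω i ^ 2 ∂μ) - ∑ i ∈ A, ∫ ω, X s ω i ^ 2 ∂μ := by
    intro s hs
    have hD : ∀ i, MemLp (fun ω => X (s + 1) ω i - X s ω i) 2 μ := fun i =>
      (hL (s + 1) hs i).sub (hL s (by omega) i)
    rw [← Finset.sum_sub_distrib]
    have : ∀ i ∈ A, (∫ ω, X (s + 1) ω i ^ 2 ∂μ) - ∫ ω, X s ω i ^ 2 ∂μ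
        = ∫ ω, (X (s + 1) ω i - X s ω i) ^ 2 ∂μ := fun i _ =>
      (martingale_sq_diff ℱ _ (hmart i) s (hL s (by omega) i) (hL (s + 1) hs i)).symm
    rw [Finset.sum_congr rfl this, ← integral_finsetSum _ (fun i _ => (hD i).integrable_sq)]
    refine integral_mono_ae ?_ (integrable_finsetSum _ (fun i _ => (hD i).integrable_sq)) ?_
    · exact (memLp_finsetSum A (fun i _ => hD i)).integrable_sq
    · filter_upwards [hΔ s (by omega), hΔ (s + 1) hs, hpair (s + 1) (by omega) hs]
        with ω h1 h2 h3
      refine two_coord_sq_le (fun i => X (s + 1) ω i - X s ω i) ?_ ?_ A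
      · rw [Finset.sum_sub_distrib, h1.2, h2.2, sub_self]
      · obtain ⟨i, j, h⟩ := h3
        exact ⟨i, j, fun l hi hj => sub_eq_zero.2 (h l hi hj)⟩
  rw [integral_finsetSum _ (fun t _ => integrable_condExp)]
  simp_rw [integral_condExp (ℱ.le _)]
  have htel : ∀ S ≤ T, ∑ t ∈ Finset.Icc 1 S,
      ∫ ω, (∑ i ∈ A, (X t ω i - X (t - 1) ω i)) ^ 2 ∂μ
        ≤ (∑ i ∈ A, ∫ ω, X S ω i ^ 2 ∂μ) - ∑ i ∈ A, ∫ ω, X 0 ω i ^ 2 ∂μ := by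
    intro S
    induction S with
    | zero => intro _; simp
    | succ s ih =>
      intro hs
      rw [Finset.sum_Icc_succ_top (by omega)]
      have := ih (by omega)
      have := hstep s hs
      simp only [Nat.add_sub_cancel]
      linarith
  refine (htel T le_rfl).trans (le_of_eq ?_)
  have h0 : ∀ i, ∫ ω, X 0 ω i ^ 2 ∂μ = (k * w i) ^ 2 := fun i => by
    have : ∫ ω, X 0 ω i ^ 2 ∂μ = ∫ _, (k * w i) ^ 2 ∂μ := integral_congr_ae (by
      filter_upwards [hstart] with ω h
      rw [h i])
    simpa using this
  have hT : ∀ i, ∫ ω, X T ω i ^ 2 ∂μ = k * w i := fun i => by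
    have a : ∫ ω, X T ω i ^ 2 ∂μ = ∫ ω, X T ω i ∂μ := integral_congr_ae (by
      filter_upwards [hterm] with ω h
      rcases h i with h | h <;> simp [h])
    have b : ∫ ω, X 0 ω i ∂μ = ∫ ω, X T ω i ∂μ := by
      have := (hmart i).setIntegral_eq (Nat.zero_le T) (s := Set.univ) MeasurableSet.univ
      simpa using this
    have c : ∫ ω, X 0 ω i ∂μ = ∫ _, (k * w i) ∂μ := integral_congr_ae (by
      filter_upwards [hstart] with ω h
      rw [h i])
    rw [a, ← b, c]; simp
  simp_rw [h0, hT, hη, mul_pow, ← Finset.mul_sum]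
  ring
end

section
/- For all real numbers v > 0 and c > 0, one has (v/(v+c))^(v+c) · exp(c) ≤ exp(−(c²/2)/(v + c/3)). Consequently, for all η, δ > 0 and every positive integer k, π(η,δ,k) ≤ exp(−((δ²/2)/(η + δ/3))·k). -/
open Real

theorem log_aux (x : ℝ) (hx : 0 ≤ x) :
    (5 * x ^ 2 + 6 * x) / (2 * ((3 + x) * (1 + x))) ≤ Real.log (1 + x) := by
  have hd : ∀ y : ℝ, 0 ≤ y → HasDerivAt
      (fun y : ℝ => Real.log (1 + y) - (5 * y ^ 2 + 6 * y) / (2 * ((3 + y) * (1 + y))))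
      (y ^ 3 / ((3 + y) ^ 2 * (1 + y) ^ 2)) y := by
    intro y hy
    have h1 : (1 + y) ≠ 0 := by positivity
    have h3 : (3 + y) ≠ 0 := by positivity
    have a1 : HasDerivAt (fun y : ℝ => 1 + y) 1 y := (hasDerivAt_id y).const_add 1
    have a3 : HasDerivAt (fun y : ℝ => 3 + y) 1 y := (hasDerivAt_id y).const_add 3
    have n1 : HasDerivAt (fun y : ℝ => 5 * y ^ 2 + 6 * y) (5 * (2 * y) + 6 * 1) y := by
      have := ((hasDerivAt_pow 2 y).const_mul 5).add ((hasDerivAt_id y).const_mul 6)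
      exact this.congr_deriv (by norm_num)
    have d1 := (a3.mul a1).const_mul 2
    have hne : 2 * ((3 + y) * (1 + y)) ≠ 0 := by positivity
    have := (a1.log h1).sub (n1.div d1 hne)
    refine this.congr_deriv ?_
    simp only [Pi.mul_apply]
    field_simp
    ring
  have hm : MonotoneOn
      (fun y : ℝ => Real.log (1 + y) - (5 * y ^ 2 + 6 * y) / (2 * ((3 + y) * (1 + y))))
      (Set.Ici 0) := by
    apply monotoneOn_of_deriv_nonneg (convex_Ici 0)
    · intro y hy
      exact (hd y hy).continuousAt.continuousWithinAt
    · intro y hy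
      exact (hd y (interior_subset hy)).differentiableAt.differentiableWithinAt
    · intro y hy
      have hy' : (0 : ℝ) ≤ y := interior_subset hy
      rw [(hd y hy').deriv]
      positivity
  have := hm (Set.mem_Ici.2 le_rfl) (Set.mem_Ici.2 hx) hx
  simp at this
  exact this

theorem bern_aux (v c : ℝ) (hv : 0 < v) (hc : 0 < c) :
    (v / (v + c)) ^ (v + c) * Real.exp c ≤ Real.exp (-(c ^ 2 / 2) / (v + c / 3)) := by
  have hl := log_aux (c / v) (by positivity)
  have e : v / (v + c) = (1 + c / v)⁻¹ := by field_simp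
  rw [Real.rpow_def_of_pos (by positivity), ← Real.exp_add, e, Real.log_inv]
  apply Real.exp_le_exp.2
  have h2 := mul_le_mul_of_nonneg_right hl (by positivity : 0 ≤ v + c)
  have h3 : (5 * (c / v) ^ 2 + 6 * (c / v)) / (2 * ((3 + c / v) * (1 + c / v))) * (v + c)
      = c - -(c ^ 2 / 2) / (v + c / 3) := by
    field_simp
    ring
  linarith

/-- For all `v, c > 0`,
`(v/(v+c))^(v+c)·exp c ≤ exp(−(c²/2)/(v+c/3))`; consequently, for all `η, δ > 0` and
positive integers `k`, `π(η,δ,k) ≤ exp(−((δ²/2)/(η+δ/3))·k)`. -/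
theorem freedman_bound_le_bernstein :
    (∀ v c : ℝ, 0 < v → 0 < c →
      (v / (v + c)) ^ (v + c) * Real.exp c ≤ Real.exp (-(c ^ 2 / 2) / (v + c / 3))) ∧
    (∀ η δ : ℝ, 0 < η → 0 < δ → ∀ k : ℕ, 0 < k →
      piBound η δ k ≤ Real.exp (-(δ ^ 2 / 2 / (η + δ / 3)) * k)) := by
  refine ⟨bern_aux, fun η δ hη hδ k _ => ?_⟩
  have h := pow_le_pow_left₀ (by positivity) (bern_aux η δ hη hδ) k
  unfold piBound
  refine h.trans (le_of_eq ?_)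
  rw [← Real.exp_nat_mul]
  congr 1
  ring
end

section
/- (Monotonicity of the Fan–Grama–Liu bound in the variance parameter.) For every fixed δ with 0 < δ < 1, the function η ↦ D((η+δ)/(1+η) ‖ η/(1+η)) is nonincreasing on (0,∞). Consequently, for every positive integer k, π*(η,δ,k) := exp(−D((η+δ)/(1+η) ‖ η/(1+η))·k) is nondecreasing in η. -/
open Real

lemma klDiv_eq_aux (δ η : ℝ) (hδ1 : δ < 1) (hδ0 : 0 < δ) (h : 0 < η) :
    klDiv ((η + δ) / (1 + η)) (η / (1 + η)) =
      ((η + δ) * (log (η + δ) - log η) + (1 - δ) * log (1 - δ)) / (1 + η) := by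
  have h1 : (1 + η) ≠ 0 := by positivity
  have h2 : (η + δ) / (1 + η) / (η / (1 + η)) = (η + δ) / η := by field_simp
  have h3 : 1 - (η + δ) / (1 + η) = (1 - δ) / (1 + η) := by field_simp; ring
  have h4 : (1 - δ) / (1 + η) / (1 - η / (1 + η)) = 1 - δ := by
    have : 1 - η / (1 + η) = 1 / (1 + η) := by field_simp; ring
    rw [this]; field_simp
  unfold klDiv
  rw [h2, h3, h4, log_div (by positivity) h.ne']
  field_simp

lemma hasDerivAt_aux (δ η : ℝ) (hδ0 : 0 < δ) (h : 0 < η) :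
    HasDerivAt (fun η : ℝ =>
      ((η + δ) * (log (η + δ) - log η) + (1 - δ) * log (1 - δ)) / (1 + η))
      (((1 * (log (η + δ) - log η) + (η + δ) * (1 / (η + δ) - 1 / η)) * (1 + η)
        - ((η + δ) * (log (η + δ) - log η) + (1 - δ) * log (1 - δ)) * 1) / (1 + η) ^ 2) η := by
  have a := (hasDerivAt_id' η).add_const δ
  have b := (a.log (by positivity)).sub ((hasDerivAt_id' η).log h.ne')
  exact ((a.mul b).add_const _).div ((hasDerivAt_id' η).const_add 1) (by positivity)

/-- **Monotonicity of the Fan–Grama–Liu bound in the variance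
parameter.** For fixed `0 < δ < 1`, `η ↦ D((η+δ)/(1+η) ‖ η/(1+η))` is nonincreasing
on `(0,∞)`, and consequently `π*(η,δ,k)` is nondecreasing in `η` for every positive
integer `k`. -/
theorem piStar_monotone (δ : ℝ) (hδ0 : 0 < δ) (hδ1 : δ < 1) :
    AntitoneOn (fun η : ℝ => klDiv ((η + δ) / (1 + η)) (η / (1 + η))) (Set.Ioi 0) ∧
    (∀ k : ℕ, 0 < k → MonotoneOn (fun η : ℝ => piStar η δ k) (Set.Ioi 0)) := by
  have main : AntitoneOn (fun η : ℝ => klDiv ((η + δ) / (1 + η)) (η / (1 + η))) (Set.Ioi 0) := by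
    have key : AntitoneOn (fun η : ℝ =>
        ((η + δ) * (log (η + δ) - log η) + (1 - δ) * log (1 - δ)) / (1 + η)) (Set.Ioi 0) := by
      apply antitoneOn_of_deriv_nonpos (convex_Ioi 0)
      · intro x hx
        exact (hasDerivAt_aux δ x hδ0 hx).continuousAt.continuousWithinAt
      · intro x hx
        rw [interior_Ioi] at hx
        exact (hasDerivAt_aux δ x hδ0 hx).differentiableAt.differentiableWithinAt
      · intro x hx
        rw [interior_Ioi] at hx
        have hx : 0 < x := hx
        rw [(hasDerivAt_aux δ x hδ0 hx).deriv]
        apply div_nonpos_of_nonpos_of_nonneg _ (by positivity)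
        have h1 : 0 < 1 - δ := by linarith
        have h2 := log_le_sub_one_of_pos (show 0 < (x + δ) / (x * (1 - δ)) by positivity)
        rw [log_div (by positivity) (by positivity), log_mul hx.ne' h1.ne'] at h2
        have h3 := mul_le_mul_of_nonneg_left h2 h1.le
        have h4 : (1 - δ) * ((x + δ) / (x * (1 - δ)) - 1) = δ * (1 + x) / x := by
          field_simp; ring
        have h5 : (x + δ) * (1 / (x + δ) - 1 / x) * (1 + x) = - (δ * (1 + x) / x) := by
          have : x + δ ≠ 0 := by positivity
          field_simp; ring
        rw [h4] at h3
        linarith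
    exact key.congr fun x hx => (klDiv_eq_aux δ x hδ1 hδ0 hx).symm
  refine ⟨main, fun k _ a ha b hb hab => ?_⟩
  have := main ha hb hab
  simp only [piStar] at this ⊢
  gcongr
end

section
/- (Sharpened Pinsker inequality.) Let p ∈ (0,1) with p ≠ 1/2, and set C(p) := (1/(1−2p))·ln((1−p)/p), so that C(p) = D(1−p‖p)/(1−2p)². Then for every q ∈ (0,1) with q ≠ p, D(q‖p)/(q−p)² ≥ C(p), with equality when q = 1−p; that is, the function q ↦ D(q‖p)/(q−p)² on (0,1)∖{p} attains its minimum at q = 1−p, and hence D(q‖p) ≥ C(p)·(q−p)² for all q ∈ (0,1). -/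
open Real

lemma sp_h_concave (C : ℝ) :
    ConcaveOn ℝ (Set.Ioc (0 : ℝ) (1 / 2)) (fun x => log x - log (1 - x) + C * (1 - 2 * x)) := by
  have hd : ∀ x ∈ Set.Ioo (0 : ℝ) 1,
      HasDerivAt (fun x => log x - log (1 - x) + C * (1 - 2 * x))
        (1 / x - (-1) / (1 - x) + C * (-(2 * 1))) x := by
    intro x hx
    have h1 : HasDerivAt (fun x : ℝ => log x) (1 / x) x := (hasDerivAt_id x).log hx.1.ne'
    have h2 : HasDerivAt (fun x : ℝ => log (1 - x)) ((-1) / (1 - x)) x :=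
      ((hasDerivAt_id x).const_sub 1).log (sub_pos.2 hx.2).ne'
    have h3 : HasDerivAt (fun x : ℝ => C * (1 - 2 * x)) (C * (-(2 * 1))) x :=
      (((hasDerivAt_id x).const_mul 2).const_sub 1).const_mul C
    exact (h1.sub h2).add h3
  have hinter : interior (Set.Ioc (0 : ℝ) (1 / 2)) = Set.Ioo 0 (1 / 2) := interior_Ioc
  apply AntitoneOn.concaveOn_of_deriv (convex_Ioc _ _)
  · intro x hx
    exact (hd x ⟨hx.1, by linarith [hx.2]⟩).continuousAt.continuousWithinAt
  · rw [hinter]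
    intro x hx
    exact (hd x ⟨hx.1, by linarith [hx.2]⟩).differentiableAt.differentiableWithinAt
  · rw [hinter]
    intro x hx y hy hxy
    obtain ⟨hx1, hx2⟩ := hx
    obtain ⟨hy1, hy2⟩ := hy
    rw [(hd x ⟨hx1, by linarith⟩).deriv, (hd y ⟨hy1, by linarith⟩).deriv]
    have e : ∀ z : ℝ, 0 < z → z < 1 / 2 → 1 / z - (-1) / (1 - z) = 1 / (z * (1 - z)) := by
      intro z h0 h1
      have : (1 - z) ≠ 0 := by linarith
      field_simp
      ring
    rw [e x hx1 hx2, e y hy1 hy2]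
    have : 1 / (y * (1 - y)) ≤ 1 / (x * (1 - x)) := by
      apply one_div_le_one_div_of_le
      · apply mul_pos hx1; linarith
      · nlinarith
    linarith

lemma sp_kl_symm (q p : ℝ) : klDiv (1 - q) (1 - p) = klDiv q p := by
  unfold klDiv
  simp only [sub_sub_cancel]
  ring

lemma sp_kl_expand (q p : ℝ) (hq : q ∈ Set.Ioo (0 : ℝ) 1) (hp : p ∈ Set.Ioo (0 : ℝ) 1) :
    klDiv q p = q * (log q - log p) + (1 - q) * (log (1 - q) - log (1 - p)) := by
  have := hq.1.ne'
  have := hp.1.ne'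
  have := (sub_pos.2 hq.2).ne'
  have := (sub_pos.2 hp.2).ne'
  unfold klDiv
  rw [log_div, log_div] <;> assumption

lemma sp_half (p C : ℝ) (hp : 0 < p) (hp2 : p < 1 / 2)
    (hC : C * (1 - 2 * p) = log (1 - p) - log p) (q : ℝ) (hq : 0 < q) (hq2 : q ≤ 1 / 2) :
    C * (q - p) ^ 2 ≤ klDiv q p := by
  set h : ℝ → ℝ := fun x => log x - log (1 - x) + C * (1 - 2 * x) with hh
  have hconc : ConcaveOn ℝ (Set.Ioc (0 : ℝ) (1 / 2)) h := sp_h_concave C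
  have hp0 : h p = 0 := by simp only [hh]; linarith
  have hhalf : h (1 / 2) = 0 := by simp only [hh]; norm_num
  set F : ℝ → ℝ := fun x => x * (log x - log p) + (1 - x) * (log (1 - x) - log (1 - p))
    - C * (x - p) ^ 2 with hF
  have hd : ∀ x ∈ Set.Ioo (0 : ℝ) 1, HasDerivAt F (h x) x := by
    intro x hx
    have hx0 := hx.1.ne'
    have hx1 := (sub_pos.2 hx.2).ne'
    have h1 : HasDerivAt (fun x : ℝ => log x) (1 / x) x := (hasDerivAt_id x).log hx0
    have h0 : HasDerivAt (fun x : ℝ => 1 - x) (-1) x := (hasDerivAt_id x).const_sub 1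
    have h2 : HasDerivAt (fun x : ℝ => log (1 - x)) ((-1) / (1 - x)) x := h0.log hx1
    have h3 := ((((hasDerivAt_id x).sub_const p).pow 2).const_mul C)
    have h4 := (((hasDerivAt_id x).mul (h1.sub_const (log p))).add
      (h0.mul (h2.sub_const (log (1 - p))))).sub h3
    refine h4.congr_deriv ?_
    simp only [hh, id]
    field_simp
    push_cast
    linear_combination -hC
  have hFp : F p = 0 := by simp [hF]
  have key : 0 ≤ F q := by
    rcases le_total q p with hqp | hqp
    · have hanti : AntitoneOn F (Set.Icc q p) := by
        apply antitoneOn_of_deriv_nonpos (convex_Icc _ _)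
        · intro x hx
          exact (hd x ⟨by linarith [hx.1], by linarith [hx.2]⟩).continuousAt.continuousWithinAt
        · intro x hx
          rw [interior_Icc] at hx
          exact (hd x ⟨by linarith [hx.1], by linarith [hx.2]⟩).differentiableAt.differentiableWithinAt
        · intro x hx
          rw [interior_Icc] at hx
          obtain ⟨ha, hb⟩ := hx
          rw [(hd x ⟨by linarith, by linarith⟩).deriv]
          have := hconc.slope_anti_adjacent (x := x) (y := p) (z := 1 / 2)
            ⟨by linarith, by linarith⟩ ⟨by norm_num, le_rfl⟩ hb hp2
          rw [hp0, hhalf, sub_zero, zero_div, le_div_iff₀ (by linarith)] at this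
          linarith
      rw [← hFp]
      exact hanti ⟨le_rfl, hqp⟩ ⟨hqp, le_rfl⟩ hqp
    · have hmono : MonotoneOn F (Set.Icc p q) := by
        apply monotoneOn_of_deriv_nonneg (convex_Icc _ _)
        · intro x hx
          exact (hd x ⟨by linarith [hx.1], by linarith [hx.2]⟩).continuousAt.continuousWithinAt
        · intro x hx
          rw [interior_Icc] at hx
          exact (hd x ⟨by linarith [hx.1], by linarith [hx.2]⟩).differentiableAt.differentiableWithinAt
        · intro x hx
          rw [interior_Icc] at hx
          obtain ⟨ha, hb⟩ := hx
          rw [(hd x ⟨by linarith, by linarith⟩).deriv]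
          have := hconc.min_le_of_mem_Icc (x := p) (y := 1 / 2) (z := x)
            ⟨hp, hp2.le⟩ ⟨by norm_num, le_rfl⟩ ⟨ha.le, by linarith⟩
          rwa [hp0, hhalf, min_self] at this
      rw [← hFp]
      exact hmono ⟨le_rfl, hqp⟩ ⟨hqp, le_rfl⟩ hqp
  rw [sp_kl_expand q p ⟨hq, by linarith⟩ ⟨hp, by linarith⟩]
  simp only [hF] at key
  linarith

lemma sp_refl (p C : ℝ) (hp : p ∈ Set.Ioo (0 : ℝ) 1)
    (hC : C * (1 - 2 * p) = log (1 - p) - log p) (q : ℝ) (hq : q ∈ Set.Ioo (0 : ℝ) 1) :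
    klDiv q p - C * (q - p) ^ 2 = klDiv (1 - q) p - C * (1 - q - p) ^ 2 := by
  rw [sp_kl_expand q p hq hp,
    sp_kl_expand (1 - q) p ⟨by linarith [hq.2], by linarith [hq.1]⟩ hp, sub_sub_cancel]
  linear_combination (1 - 2 * q) * hC

lemma sp_lt (p C : ℝ) (hp : 0 < p) (hp2 : p < 1 / 2)
    (hC : C * (1 - 2 * p) = log (1 - p) - log p) (q : ℝ) (hq : q ∈ Set.Ioo (0 : ℝ) 1) :
    C * (q - p) ^ 2 ≤ klDiv q p := by
  rcases le_total q (1 / 2) with h | h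
  · exact sp_half p C hp hp2 hC q hq.1 h
  · have h1 := sp_half p C hp hp2 hC (1 - q) (by linarith [hq.2]) (by linarith)
    have h2 := sp_refl p C ⟨hp, by linarith⟩ hC q hq
    linarith

/-- **Sharpened Pinsker inequality.** For `p ∈ (0,1)`, `p ≠ 1/2`, and
`C(p) := (1/(1−2p))·ln((1−p)/p)`, one has `C(p) = D(1−p‖p)/(1−2p)²`; the function
`q ↦ D(q‖p)/(q−p)²` on `(0,1)∖{p}` is at least `C(p)`, with equality at `q = 1−p`
(i.e. it attains its minimum there); hence `D(q‖p) ≥ C(p)·(q−p)²` for all `q ∈ (0,1)`. -/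
theorem sharpened_pinsker (p : ℝ) (hp : p ∈ Set.Ioo (0 : ℝ) 1) (hp2 : p ≠ 1 / 2)
    (C : ℝ) (hC : C = (1 / (1 - 2 * p)) * Real.log ((1 - p) / p)) :
    C = klDiv (1 - p) p / (1 - 2 * p) ^ 2 ∧
    (∀ q ∈ Set.Ioo (0 : ℝ) 1, q ≠ p → C ≤ klDiv q p / (q - p) ^ 2) ∧
    klDiv (1 - p) p / ((1 - p) - p) ^ 2 = C ∧
    (∀ q ∈ Set.Ioo (0 : ℝ) 1, C * (q - p) ^ 2 ≤ klDiv q p) := by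
  have hne : 1 - 2 * p ≠ 0 := fun h => hp2 (by linarith)
  have hC' : C * (1 - 2 * p) = log (1 - p) - log p := by
    rw [hC, log_div (sub_pos.2 hp.2).ne' hp.1.ne']
    field_simp
  have hp' : (1 - p) ∈ Set.Ioo (0 : ℝ) 1 := ⟨by linarith [hp.2], by linarith [hp.1]⟩
  have h1 : C = klDiv (1 - p) p / (1 - 2 * p) ^ 2 := by
    rw [eq_div_iff (pow_ne_zero 2 hne), sp_kl_expand _ _ hp' hp, sub_sub_cancel]
    linear_combination (1 - 2 * p) * hC'
  have h4 : ∀ q ∈ Set.Ioo (0 : ℝ) 1, C * (q - p) ^ 2 ≤ klDiv q p := by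
    intro q hq
    rcases lt_or_gt_of_ne hp2 with h | h
    · exact sp_lt p C hp.1 h hC' q hq
    · have := sp_lt (1 - p) C hp'.1 (by linarith)
        (by rw [sub_sub_cancel]; linear_combination -hC') (1 - q)
        ⟨by linarith [hq.2], by linarith [hq.1]⟩
      rw [sp_kl_symm] at this
      calc C * (q - p) ^ 2 = C * (1 - q - (1 - p)) ^ 2 := by ring
        _ ≤ _ := this
  refine ⟨h1, ?_, ?_, h4⟩
  · intro q hq hqp
    have : 0 < (q - p) ^ 2 := by have := sub_ne_zero.2 hqp; positivity
    rw [le_div_iff₀ this]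
    exact h4 q hq
  · rw [show (1 - p) - p = 1 - 2 * p by ring]
    exact h1.symm
end

section
/- For every δ with 0 ≤ δ < 1, D(1/3 + 2δ/3 ‖ 1/3) ≥ γ·δ², where γ := 4·ln(2)/3 (so γ ≈ 0.924 improves the constant 8/9). -/
open Real

lemma aux_tangent (s a : ℝ) (hs : 0 ≤ s) (ha : 0 ≤ a) (k : ℕ) :
    a ^ (k + 1) + (k + 1) * a ^ k * (s - a) ≤ s ^ (k + 1) := by
  induction k with
  | zero => simp
  | succ k ih =>
    have h1 := mul_le_mul_of_nonneg_right ih hs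
    have h2 : 0 ≤ (k + 1) * a ^ k * (s - a) ^ 2 := by positivity
    push_cast
    have e1 : s ^ (k + 1 + 1) = s ^ (k + 1) * s := by ring
    rw [e1]
    refine le_trans (le_of_sub_nonneg ?_) h1
    have : (a ^ (k + 1) + (k + 1) * a ^ k * (s - a)) * s
        - (a ^ (k + 1 + 1) + ((k : ℝ) + 1 + 1) * a ^ (k + 1) * (s - a))
        = (k + 1) * a ^ k * (s - a) ^ 2 := by ring
    rw [this]; exact h2

lemma aux_phi_s14 (u : ℝ) (hu : |u| < 1) :
    HasSum (fun k : ℕ => (u ^ 2) ^ (k + 1) * (2 / (2 * k + 1) - 1 / (k + 1)))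
      ((1 + u) * log (1 + u) + (1 - u) * log (1 - u)) := by
  have h1 := (hasSum_log_sub_log_of_abs_lt_one hu).mul_left u
  have hu' := abs_lt.mp hu
  have hs : |u ^ 2| < 1 := by
    rw [abs_pow]; exact pow_lt_one₀ (abs_nonneg u) hu two_ne_zero
  have h2 := hasSum_pow_div_log_of_abs_lt_one hs
  have h3 := h1.sub h2
  have e : (1 - u ^ 2) = (1 + u) * (1 - u) := by ring
  rw [e, log_mul (by linarith) (by linarith)] at h3
  have e3 : (1 + u) * log (1 + u) + (1 - u) * log (1 - u)
      = u * (log (1 + u) - log (1 - u)) - -(log (1 + u) + log (1 - u)) := by ring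
  rw [e3]
  have e4 : (fun k : ℕ => (u ^ 2) ^ (k + 1) * (2 / (2 * (k : ℝ) + 1) - 1 / ((k : ℝ) + 1)))
      = fun b : ℕ => u * (2 * (1 / (2 * (b : ℝ) + 1)) * u ^ (2 * b + 1))
        - (u ^ 2) ^ (b + 1) / ((b : ℝ) + 1) := by
    funext k
    ring
  rw [e4]
  exact h3

lemma aux_main_s14 (u : ℝ) (hu : |u| < 1) :
    (4 / 3) * log (4 / 3) + (2 / 3) * log (2 / 3) + (u ^ 2 - 1 / 9) * (3 / 2) * log 2
      ≤ (1 + u) * log (1 + u) + (1 - u) * log (1 - u) := by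
  have h3 : |(1 / 3 : ℝ)| < 1 := by rw [abs_of_pos] <;> norm_num
  have hp := aux_phi_s14 (1 / 3) h3
  have hg := (hasSum_log_sub_log_of_abs_lt_one h3).mul_left ((u ^ 2 - 1 / 9) * (3 / 2))
  have hs := hp.add hg
  have h2 : log (1 + 1 / 3) - log (1 - 1 / 3) = log 2 := by
    rw [← log_div (by norm_num) (by norm_num)]; norm_num
  rw [h2] at hs
  have := hasSum_le (fun k => ?_) hs (aux_phi_s14 u hu)
  · norm_num at this ⊢
    linarith
  · have ht := aux_tangent (u ^ 2) (1 / 9) (by positivity) (by norm_num) k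
    have hc : (2 / (2 * k + 1) - 1 / (k + 1) : ℝ) = 1 / ((2 * k + 1) * (k + 1)) := by
      field_simp; ring
    have hc0 : (0 : ℝ) ≤ 1 / ((2 * k + 1) * (k + 1)) := by positivity
    have := mul_le_mul_of_nonneg_right ht hc0
    simp only [hc]
    refine le_trans (le_of_eq ?_) this
    have e1 : ((1 / 3 : ℝ)) ^ (2 * k + 1) = (1 / 9) ^ k * (1 / 3) := by
      rw [pow_succ, pow_mul]; norm_num
    have e2 : ((1 / 3 : ℝ) ^ 2) = 1 / 9 := by norm_num
    rw [e1, e2]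
    field_simp

/-- For every `0 ≤ δ < 1`, `D(1/3 + 2δ/3 ‖ 1/3) ≥ γ·δ²` with
`γ := 4·ln(2)/3 ≈ 0.924`, improving the constant `8/9`. -/
theorem kl_third_ge_sharp (δ : ℝ) (hδ0 : 0 ≤ δ) (hδ1 : δ < 1) :
    (4 * Real.log 2 / 3) * δ ^ 2 ≤ klDiv (1 / 3 + 2 * δ / 3) (1 / 3) := by
  have h := aux_main_s14 ((4 * δ - 1) / 3) (by rw [abs_lt]; constructor <;> linarith)
  unfold klDiv
  have l4 : log 4 = 2 * log 2 := by
    rw [show (4 : ℝ) = 2 ^ 2 by norm_num, log_pow]; norm_num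
  have a1 : 1 + (4 * δ - 1) / 3 = (2 / 3) * (1 + 2 * δ) := by ring
  have a2 : 1 - (4 * δ - 1) / 3 = (4 / 3) * (1 - δ) := by ring
  have a3 : (1 / 3 + 2 * δ / 3) / (1 / 3) = 1 + 2 * δ := by ring
  have a4 : (1 - (1 / 3 + 2 * δ / 3)) / (1 - 1 / 3) = 1 - δ := by ring
  rw [a1, a2, log_mul (by norm_num) (by linarith), log_mul (by norm_num) (by linarith),
    log_div (by norm_num) (by norm_num), log_div (by norm_num) (by norm_num), l4] at h
  rw [a3, a4]
  linarith
end

section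
/- (Freedman's inequality, a.s.-bounded-variance form.) Let (M_t)_{t=0,…,T} be a real-valued martingale adapted to a filtration (F_t) whose differences Y_t := M_t − M_{t−1} satisfy |Y_t| ≤ 1 almost surely for every t, and suppose Σ_{t=1}^T E[Y_t² | F_{t−1}] ≤ v almost surely for a constant v > 0. Then for every c > 0, P[M_T − M_0 ≥ c] ≤ (v/(v+c))^(v+c)·exp(c). -/
open MeasureTheory ProbabilityTheory Real

theorem freedman_exp_bound (l y : ℝ) (hl : 0 ≤ l) (hy : |y| ≤ 1) :
    Real.exp (l * y) ≤ 1 + l * y + (Real.exp l - 1 - l) * y ^ 2 := by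
  have h1 : HasSum (fun k : ℕ => l ^ k / (k.factorial : ℝ)) (Real.exp l) := by
    rw [Real.exp_eq_exp_ℝ]; exact NormedSpace.expSeries_div_hasSum_exp l
  have h2 : HasSum (fun k : ℕ => (l * y) ^ k / (k.factorial : ℝ)) (Real.exp (l * y)) := by
    rw [Real.exp_eq_exp_ℝ]; exact NormedSpace.expSeries_div_hasSum_exp (l * y)
  have h3 := (h1.mul_left (y ^ 2)).sub h2
  have h4 := sum_le_hasSum (Finset.range 2) (fun k hk => ?_) h3
  · simp [Finset.sum_range_succ] at h4
    nlinarith [h4]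
  · have hk2 : 2 ≤ k := by
      have := Finset.mem_range.not.1 hk
      omega
    have hyk : y ^ k ≤ y ^ 2 := by
      calc y ^ k ≤ |y ^ k| := le_abs_self _
        _ = |y| ^ k := abs_pow _ _
        _ ≤ |y| ^ 2 := pow_le_pow_of_le_one (abs_nonneg _) hy hk2
        _ = y ^ 2 := sq_abs y
    have : y ^ 2 * (l ^ k / (k.factorial : ℝ)) - (l * y) ^ k / (k.factorial : ℝ)
        = (l ^ k / (k.factorial : ℝ)) * (y ^ 2 - y ^ k) := by
      rw [mul_pow]; ring
    rw [this]
    exact mul_nonneg (by positivity) (sub_nonneg.2 hyk)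

theorem freedman_step {Ω : Type*} {m m0 : MeasurableSpace Ω} {μ : Measure Ω}
    [IsProbabilityMeasure μ] (hm : m ≤ m0) (Z Y : Ω → ℝ) (l K : ℝ) (hl : 0 ≤ l)
    (hZm : StronglyMeasurable[m] Z) (hZ0 : ∀ ω, 0 ≤ Z ω) (hZK : ∀ᵐ ω ∂μ, Z ω ≤ K)
    (hYm : StronglyMeasurable[m0] Y) (hY1 : ∀ᵐ ω ∂μ, |Y ω| ≤ 1) (hYc : μ[Y | m] =ᵐ[μ] 0) :
    ∫ ω, Z ω * Real.exp (l * Y ω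
        - (Real.exp l - 1 - l) * (μ[fun ω' => Y ω' ^ 2 | m]) ω) ∂μ ≤ ∫ ω, Z ω ∂μ := by
  set p := Real.exp l - 1 - l with hp
  have hp0 : 0 ≤ p := by have := Real.add_one_le_exp l; linarith
  set W := μ[fun ω' => Y ω' ^ 2 | m] with hW
  have hWm : StronglyMeasurable[m] W := stronglyMeasurable_condExp
  have hW0 : ∀ᵐ ω ∂μ, 0 ≤ W ω :=
    condExp_nonneg (Filter.Eventually.of_forall fun ω => sq_nonneg (Y ω))
  have hYi : Integrable Y μ :=
    Integrable.of_bound hYm.aestronglyMeasurable 1 (by simpa using hY1)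
  have hY2i : Integrable (fun ω => Y ω ^ 2) μ := by
    refine Integrable.of_bound (hYm.pow 2).aestronglyMeasurable 1 ?_
    filter_upwards [hY1] with ω h
    rw [Real.norm_eq_abs, abs_pow]
    exact pow_le_one₀ (abs_nonneg _) h
  let A : Ω → ℝ := fun ω => Z ω * Real.exp (-(p * W ω))
  have hexpm : StronglyMeasurable[m] (fun ω => Real.exp (-(p * W ω))) :=
    Real.continuous_exp.comp_stronglyMeasurable (hWm.const_mul p).neg
  have hAm : StronglyMeasurable[m] A := hZm.mul hexpm
  have hA0 : ∀ ω, 0 ≤ A ω := fun ω => mul_nonneg (hZ0 ω) (Real.exp_pos _).le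
  have hAK : ∀ᵐ ω ∂μ, ‖A ω‖ ≤ K := by
    filter_upwards [hZK, hW0] with ω h1 h2
    rw [Real.norm_eq_abs, abs_of_nonneg (hA0 ω)]
    refine le_trans (mul_le_of_le_one_right (hZ0 ω) ?_) h1
    rw [Real.exp_le_one_iff]
    have := mul_nonneg hp0 h2
    linarith
  let G : Ω → ℝ := (fun _ => (1 : ℝ)) + (l • Y + p • (fun ω => Y ω ^ 2))
  have hGi : Integrable G μ :=
    (integrable_const 1).add ((hYi.smul l).add (hY2i.smul p))
  have hGc : μ[G | m] =ᵐ[μ] fun ω => 1 + p * W ω := by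
    have e1 := condExp_add (integrable_const (1 : ℝ)) ((hYi.smul l).add (hY2i.smul p)) m (μ := μ)
    have e2 := condExp_add (hYi.smul l) (hY2i.smul p) m
    have e3 := condExp_smul (μ := μ) l Y m
    have e4 := condExp_smul (μ := μ) p (fun ω => Y ω ^ 2) m
    have e5 := condExp_const (μ := μ) hm (1 : ℝ)
    filter_upwards [e1, e2, e3, e4, hYc] with ω h1 h2 h3 h4 h5
    change (μ[(fun _ => (1 : ℝ)) + (l • Y + p • (fun ω => Y ω ^ 2)) | m]) ω = _
    rw [h1, Pi.add_apply, h2, Pi.add_apply, h3, h4, e5]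
    simp [h5, hW]
  have hAG := condExp_stronglyMeasurable_mul_of_bound hm hAm hGi K hAK
  have hAGi : Integrable (A * G) μ := hGi.bdd_mul (hAm.mono hm).aestronglyMeasurable hAK
  have hZi : Integrable Z μ := by
    refine Integrable.of_bound (hZm.mono hm).aestronglyMeasurable K ?_
    filter_upwards [hZK] with ω h
    rwa [Real.norm_eq_abs, abs_of_nonneg (hZ0 ω)]
  calc ∫ ω, Z ω * Real.exp (l * Y ω - p * W ω) ∂μ
      ≤ ∫ ω, (A * G) ω ∂μ := by
        refine integral_mono_of_nonneg (Filter.Eventually.of_forall fun ω =>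
          mul_nonneg (hZ0 ω) (Real.exp_pos _).le) hAGi ?_
        filter_upwards [hY1] with ω h
        have e : Z ω * Real.exp (l * Y ω - p * W ω) = A ω * Real.exp (l * Y ω) := by
          simp only [A]
          rw [mul_assoc, ← Real.exp_add]; congr 2; ring
        simp only [e, Pi.mul_apply]
        refine mul_le_mul_of_nonneg_left ?_ (hA0 ω)
        have := freedman_exp_bound l (Y ω) hl h
        simp only [G, Pi.add_apply, Pi.smul_apply, smul_eq_mul]
        linarith
    _ = ∫ ω, (μ[A * G | m]) ω ∂μ := (integral_condExp hm).symm
    _ ≤ ∫ ω, Z ω ∂μ := by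
        refine integral_mono_ae integrable_condExp hZi ?_
        filter_upwards [hAG, hGc] with ω h1 h2
        rw [h1, Pi.mul_apply, h2]
        have h3 := Real.add_one_le_exp (p * W ω)
        calc A ω * (1 + p * W ω) ≤ A ω * Real.exp (p * W ω) :=
              mul_le_mul_of_nonneg_left (by linarith) (hA0 ω)
          _ = Z ω := by
              simp only [A]
              rw [mul_assoc, ← Real.exp_add]; simp

/-- **Freedman's inequality, a.s.-bounded-variance form.** For a
real-valued martingale `(M_t)_{t=0,…,T}` with increments bounded by `1` in absolute
value and total conditional variance at most `v` almost surely, one has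
`P[M_T − M_0 ≥ c] ≤ (v/(v+c))^(v+c)·exp c` for every `c > 0`. -/
theorem freedman_inequality
    {Ω : Type*} {m0 : MeasurableSpace Ω} {μ : Measure Ω} [IsProbabilityMeasure μ]
    (ℱ : Filtration ℕ m0) (T : ℕ)
    (M : ℕ → Ω → ℝ) (hmart : Martingale M ℱ μ)
    (hdiff : ∀ t, 1 ≤ t → t ≤ T → ∀ᵐ ω ∂μ, |M t ω - M (t - 1) ω| ≤ 1)
    (v : ℝ) (hv : 0 < v)
    (hvar : ∀ᵐ ω ∂μ,
      ∑ t ∈ Finset.Icc 1 T,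
        (μ[fun ω' => (M t ω' - M (t - 1) ω') ^ 2 | ℱ (t - 1)]) ω ≤ v)
    (c : ℝ) (hc : 0 < c) :
    μ {ω | c ≤ M T ω - M 0 ω} ≤
      ENNReal.ofReal ((v / (v + c)) ^ (v + c) * Real.exp c) := by
  classical
  set l := Real.log ((v + c) / v) with hl_def
  have hvc : 0 < v + c := by linarith
  have hl : 0 ≤ l := Real.log_nonneg (by rw [le_div_iff₀ hv]; linarith)
  have hel : Real.exp l = (v + c) / v := Real.exp_log (by positivity)
  set p := Real.exp l - 1 - l with hp
  have hp0 : 0 ≤ p := by have := Real.add_one_le_exp l; linarith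
  let W : ℕ → Ω → ℝ := fun t => μ[fun ω' => (M (t + 1) ω' - M t ω') ^ 2 | ℱ t]
  have hWm : ∀ t, StronglyMeasurable[ℱ t] (W t) := fun t => stronglyMeasurable_condExp
  have hW0 : ∀ t, ∀ᵐ ω ∂μ, 0 ≤ W t ω := fun t =>
    condExp_nonneg (Filter.Eventually.of_forall fun ω => sq_nonneg _)
  let V : ℕ → Ω → ℝ := fun n ω => ∑ t ∈ Finset.range n, W t ω
  let Z : ℕ → Ω → ℝ := fun n ω => Real.exp (l * (M n ω - M 0 ω) - p * V n ω)
  have hMm : ∀ n, StronglyMeasurable[ℱ n] (M n) := fun n => hmart.stronglyMeasurable n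
  have hVm : ∀ n, StronglyMeasurable[ℱ n] (V n) := fun n =>
    Finset.stronglyMeasurable_fun_sum _ fun t ht =>
      (hWm t).mono (ℱ.mono (Finset.mem_range.1 ht).le)
  have hZm : ∀ n, StronglyMeasurable[ℱ n] (Z n) := fun n =>
    Real.continuous_exp.comp_stronglyMeasurable
      ((((hMm n).sub ((hMm 0).mono (ℱ.mono (Nat.zero_le n)))).const_mul l).sub
        ((hVm n).const_mul p))
  have hd : ∀ t, t < T → ∀ᵐ ω ∂μ, |M (t + 1) ω - M t ω| ≤ 1 := fun t ht => by
    simpa using hdiff (t + 1) (by omega) (by omega)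
  have hZK : ∀ n, n ≤ T → ∀ᵐ ω ∂μ, Z n ω ≤ Real.exp (l * n) := by
    intro n
    induction n with
    | zero => intro _; simp [Z, V]
    | succ n ih =>
      intro hn
      filter_upwards [ih (by omega), hd n (by omega), hW0 n] with ω h1 h2 h3
      simp only [Z, V, Real.exp_le_exp, Finset.sum_range_succ] at h1 ⊢
      have h4 := mul_le_mul_of_nonneg_left (abs_le.1 h2).2 hl
      have h5 := mul_nonneg hp0 h3
      push_cast
      linarith
  have hint : ∀ n, n ≤ T → ∫ ω, Z n ω ∂μ ≤ 1 := by
    intro n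
    induction n with
    | zero => intro _; simp [Z, V]
    | succ n ih =>
      intro hn
      refine le_trans (le_of_eq ?_) ((freedman_step (ℱ.le n) (Z n) (fun ω => M (n + 1) ω - M n ω) l
        (Real.exp (l * n)) hl (hZm n) (fun ω => (Real.exp_pos _).le) (hZK n (by omega))
        (((hMm (n + 1)).mono (ℱ.le _)).sub ((hMm n).mono (ℱ.le _))) (hd n (by omega)) ?_).trans
          (ih (by omega)))
      · refine integral_congr_ae (Filter.Eventually.of_forall fun ω => ?_)
        simp only [Z, V, W, Finset.sum_range_succ]
        rw [← Real.exp_add]; congr 1; ring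
      · have e1 := condExp_sub (hmart.integrable (n + 1)) (hmart.integrable n) (ℱ n)
        have e2 := hmart.condExp_ae_eq (Nat.le_succ n)
        have e3 := hmart.condExp_ae_eq (le_refl n)
        filter_upwards [e1, e2, e3] with ω h1 h2 h3
        change (μ[M (n + 1) - M n | ℱ n]) ω = 0
        rw [h1, Pi.sub_apply, h3]
        simp only [Nat.succ_eq_add_one] at h2
        rw [h2, sub_self]
  have hVT : ∀ᵐ ω ∂μ, V T ω ≤ v := by
    filter_upwards [hvar] with ω h
    refine le_trans (le_of_eq ?_) h
    simp only [V, W]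
    rw [Finset.range_eq_Ico]
    exact Finset.sum_Ico_add'
      (fun t => (μ[fun ω' => (M t ω' - M (t - 1) ω') ^ 2 | ℱ (t - 1)]) ω) 0 T 1
  have hZi : Integrable (Z T) μ := by
    refine Integrable.of_bound ((hZm T).mono (ℱ.le T)).aestronglyMeasurable (Real.exp (l * T)) ?_
    filter_upwards [hZK T le_rfl] with ω h
    rwa [Real.norm_eq_abs, abs_of_nonneg (Real.exp_pos _).le]
  set a := Real.exp (l * c - p * v) with ha
  have ha0 : 0 < a := Real.exp_pos _
  have hmk := mul_meas_ge_le_integral_of_nonneg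
    (Filter.Eventually.of_forall fun ω => (Real.exp_pos _).le : 0 ≤ᵐ[μ] Z T) hZi a
  have hfin : (v / (v + c)) ^ (v + c) * Real.exp c = a⁻¹ := by
    rw [Real.rpow_def_of_pos (by positivity), ← Real.exp_add, ha, ← Real.exp_neg]
    congr 1
    have : Real.log (v / (v + c)) = -l := by
      rw [hl_def, ← Real.log_inv, inv_div]
    rw [this, hp, hel]
    field_simp
    ring
  rw [hfin]
  calc μ {ω | c ≤ M T ω - M 0 ω} ≤ μ {ω | a ≤ Z T ω} := by
        refine measure_mono_ae ?_
        filter_upwards [hVT] with ω h1 h2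
        change a ≤ Z T ω
        have h2' : c ≤ M T ω - M 0 ω := h2
        simp only [Z, ha, Real.exp_le_exp]
        have h3 := mul_le_mul_of_nonneg_left h2' hl
        have h4 := mul_le_mul_of_nonneg_left h1 hp0
        linarith
    _ = ENNReal.ofReal (μ.real {ω | a ≤ Z T ω}) := by
        rw [ofReal_measureReal]
    _ ≤ ENNReal.ofReal a⁻¹ := by
        refine ENNReal.ofReal_le_ofReal ?_
        rw [← one_div, le_div_iff₀ ha0, mul_comm]
        exact hmk.trans (hint T le_rfl)
end
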